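/- Let r, n ≥ 1 be integers and let A ∈ M_{rn}(ℂ) be a positive semidefinite contraction (0 ≤ A ≤ I) all of whose diagonal entries are at most α ≥ 0. Then there exists a partition [rn] = S_1 ⊔ S_2 ⊔ ⋯ ⊔ S_r with |S_k| = n for every k ∈ [r], such that for every k ∈ [r] the largest eigenvalue of the principal submatrix A(S_k) is at most 4·r^{−1/4} + α. -/

import Mathlib

open ComplexOrder

/-- the principal submatrix `A(S)` -/
def subMat {m : ℕ} (A : Matrix (Fin m) (Fin m) ℂ) (S : Finset (Fin m)) :
    Matrix {x // x ∈ S} {x // x ∈ S} ℂ :=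
  A.submatrix Subtype.val Subtype.val

section

open Polynomial Filter Topology

/-- A product of complex polynomials `D * conj p` is dissipative when `D / p` maps the upper
half-plane to the closed lower one and vice versa. -/
def Dissipative (D p : ℂ[X]) : Prop :=
  ∀ y : ℂ, y.im * (D.eval y * (starRingEnd ℂ) (p.eval y)).im ≤ 0

theorem exists_im_pow_pos {c : ℂ} (hc : c ≠ 0) {m : ℕ} (hm : 2 ≤ m) :
    ∃ u : ℂ, 0 < u.im ∧ 0 < (c * u ^ m).im := by
  by_contra! H
  have key : ∀ ψ : ℝ, 0 < ψ → ψ < 2 * Real.pi → c.re * Real.sin ψ + c.im * Real.cos ψ ≤ 0 := by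
    intro ψ h0 h1
    have hm' : (2 : ℝ) ≤ m := by exact_mod_cast hm
    have hm0 : (m : ℂ) ≠ 0 := by
      have : m ≠ 0 := by omega
      exact_mod_cast this
    have h := H (Complex.exp ((ψ / m : ℝ) * Complex.I)) ?_
    · rw [← Complex.exp_nat_mul] at h
      have e : (m : ℂ) * ((ψ / m : ℝ) * Complex.I) = (ψ : ℝ) * Complex.I := by
        push_cast
        field_simp
      rw [e, Complex.mul_im, Complex.exp_ofReal_mul_I_re, Complex.exp_ofReal_mul_I_im] at h
      linarith
    · rw [Complex.exp_ofReal_mul_I_im]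
      apply Real.sin_pos_of_pos_of_lt_pi
      · positivity
      · rw [div_lt_iff₀ (by linarith)]
        nlinarith [Real.pi_pos]
  have hpi := Real.pi_pos
  have h1 := key (Real.pi / 2) (by linarith) (by linarith)
  have h2 := key Real.pi (by linarith) (by linarith)
  have h3 := key (Real.pi / 2 + Real.pi) (by linarith) (by linarith)
  have h4 := key (Real.pi / 4) (by linarith) (by linarith)
  simp only [Real.sin_pi_div_two, Real.cos_pi_div_two, Real.sin_pi, Real.cos_pi,
    Real.sin_add_pi, Real.cos_add_pi, Real.sin_pi_div_four, Real.cos_pi_div_four] at h1 h2 h3 h4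
  have hs : (0 : ℝ) < √2 := by positivity
  have hre : c.re = 0 := by linarith
  have him : c.im = 0 := by
    rw [hre] at h4
    have : c.im ≤ 0 := by
      by_contra! h
      nlinarith [mul_pos h hs]
    linarith
  exact hc (Complex.ext hre him)

/-- The limit along a ray of the dissipativity inequality at a zero of `p` of order `m`. -/
theorem Dissipative.ray {D g : ℂ[X]} {ρ : ℂ} {m : ℕ} (h : Dissipative D ((X - C ρ) ^ m * g))
    (u : ℂ) {t : ℝ} (ht : 0 < t) :
    (ρ.im + t * u.im) * (D.eval (ρ + t * u) * (starRingEnd ℂ) (g.eval (ρ + t * u)) *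
      (starRingEnd ℂ) (u ^ m)).im ≤ 0 := by
  have := h (ρ + t * u)
  simp only [eval_mul, eval_pow, eval_sub, eval_X, eval_C, add_sub_cancel_left, map_mul, map_pow,
    mul_pow, Complex.conj_ofReal] at this
  have e : D.eval (ρ + t * u) * ((t : ℂ) ^ m * (starRingEnd ℂ) u ^ m *
      (starRingEnd ℂ) (g.eval (ρ + t * u))) = ((t ^ m : ℝ) : ℂ) *
      (D.eval (ρ + t * u) * (starRingEnd ℂ) (g.eval (ρ + t * u)) * (starRingEnd ℂ) (u ^ m)) := by
    push_cast
    rw [map_pow]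
    ring
  rw [e, Complex.im_ofReal_mul] at this
  have him : (ρ + t * u).im = ρ.im + t * u.im := by simp
  rw [him] at this
  have htm : 0 < t ^ m := pow_pos ht m
  by_contra! hcon
  nlinarith [mul_pos htm hcon]

theorem continuous_ray (D g : ℂ[X]) (ρ u w : ℂ) :
    Continuous fun t : ℝ ↦ (D.eval (ρ + t * u) * (starRingEnd ℂ) (g.eval (ρ + t * u)) * w).im := by
  have h1 : Continuous fun t : ℝ ↦ ρ + t * u := by fun_prop
  have h2 := D.continuous.comp h1
  have h3 := Complex.continuous_conj.comp (g.continuous.comp h1)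
  exact Complex.continuous_im.comp ((h2.mul h3).mul continuous_const)

theorem nonpos_of_continuous_of_pos {f : ℝ → ℝ} (hf : Continuous f)
    (h : ∀ t, 0 < t → f t ≤ 0) : f 0 ≤ 0 := by
  refine le_of_tendsto (hf.continuousWithinAt (s := Set.Ioi 0) (x := 0)) ?_
  filter_upwards [self_mem_nhdsWithin] with t ht using h t ht

theorem Dissipative.im_root_eq_zero {D g : ℂ[X]} {ρ : ℂ} {m : ℕ}
    (h : Dissipative D ((X - C ρ) ^ m * g)) (hm : m ≠ 0) (hD : D.eval ρ ≠ 0)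
    (hg : g.eval ρ ≠ 0) : ρ.im = 0 := by
  by_contra hρ
  set e := D.eval ρ * (starRingEnd ℂ) (g.eval ρ) with he
  have he0 : e ≠ 0 := mul_ne_zero hD ((_root_.map_ne_zero _).2 hg)
  obtain ⟨u, hu⟩ := IsAlgClosed.exists_pow_nat_eq ((ρ.im : ℂ) * (-Complex.I) * e)
    (Nat.pos_of_ne_zero hm)
  have hc : Continuous fun t : ℝ ↦ (ρ.im + t * u.im) * (D.eval (ρ + t * u) *
      (starRingEnd ℂ) (g.eval (ρ + t * u)) * (starRingEnd ℂ) (u ^ m)).im := by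
    have := continuous_ray D g ρ u ((starRingEnd ℂ) (u ^ m))
    fun_prop
  have h0 := nonpos_of_continuous_of_pos hc fun t ht ↦ h.ray u ht
  simp only [Complex.ofReal_zero, zero_mul, add_zero, hu, ← he] at h0
  have e2 : e * (starRingEnd ℂ) ((ρ.im : ℂ) * (-Complex.I) * e) =
      ((ρ.im * Complex.normSq e : ℝ) : ℂ) * Complex.I := by
    rw [map_mul, map_mul, map_neg, Complex.conj_I, Complex.conj_ofReal]
    push_cast
    rw [Complex.normSq_eq_conj_mul_self]
    ring
  rw [e2] at h0
  simp only [Complex.mul_im, Complex.ofReal_re, Complex.ofReal_im, Complex.I_re, Complex.I_im] at h0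
  have h1 := Complex.normSq_pos.2 he0
  have h2 : 0 < ρ.im * ρ.im := mul_self_pos.2 hρ
  nlinarith [mul_pos h2 h1]

theorem Dissipative.real_ray {D g : ℂ[X]} {ρ : ℂ} {m : ℕ}
    (h : Dissipative D ((X - C ρ) ^ m * g)) (hρ : ρ.im = 0) (u : ℂ) :
    u.im * (D.eval ρ * (starRingEnd ℂ) (g.eval ρ) * (starRingEnd ℂ) (u ^ m)).im ≤ 0 := by
  have hc : Continuous fun t : ℝ ↦ u.im * (D.eval (ρ + t * u) *
      (starRingEnd ℂ) (g.eval (ρ + t * u)) * (starRingEnd ℂ) (u ^ m)).im := by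
    have := continuous_ray D g ρ u ((starRingEnd ℂ) (u ^ m))
    fun_prop
  have h0 := nonpos_of_continuous_of_pos hc fun t ht ↦ ?_
  · simpa using h0
  · have := h.ray u ht
    rw [hρ, zero_add, mul_assoc] at this
    exact nonpos_of_mul_nonpos_right this ht

theorem Dissipative.order_le_one {D g : ℂ[X]} {ρ : ℂ} {m : ℕ}
    (h : Dissipative D ((X - C ρ) ^ m * g)) (hD : D.eval ρ ≠ 0)
    (hg : g.eval ρ ≠ 0) (hρ : ρ.im = 0) : m ≤ 1 := by
  by_contra! hm
  set e := D.eval ρ * (starRingEnd ℂ) (g.eval ρ) with he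
  have he0 : e ≠ 0 := mul_ne_zero hD ((_root_.map_ne_zero _).2 hg)
  obtain ⟨u, hu, hu2⟩ := exists_im_pow_pos
    (neg_ne_zero.2 ((_root_.map_ne_zero (starRingEnd ℂ)).2 he0)) hm
  have := h.real_ray hρ u
  rw [← he] at this
  have e2 : (e * (starRingEnd ℂ) (u ^ m)).im = (-(starRingEnd ℂ) e * u ^ m).im := by
    rw [neg_mul, Complex.neg_im, ← Complex.conj_im]
    simp
  rw [e2] at this
  nlinarith [mul_pos hu hu2]

theorem Dissipative.residue_nonneg {D g : ℂ[X]} {ρ : ℂ}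
    (h : Dissipative D ((X - C ρ) * g)) (hg : g.eval ρ ≠ 0) (hρ : ρ.im = 0) :
    ∃ c : ℝ, 0 ≤ c ∧ D.eval ρ = c * g.eval ρ := by
  rw [← pow_one (X - C ρ)] at h
  set e := D.eval ρ * (starRingEnd ℂ) (g.eval ρ) with he
  have hx : ∀ x : ℝ, x * e.im ≤ e.re := by
    intro x
    have := h.real_ray hρ (x + Complex.I)
    simp only [← he, pow_one, map_add, Complex.conj_ofReal, Complex.conj_I, Complex.add_im,
      Complex.ofReal_im, Complex.I_im, Complex.mul_im, Complex.add_re, Complex.ofReal_re,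
      Complex.neg_re, Complex.I_re, Complex.neg_im] at this
    linarith
  have him : e.im = 0 := by
    by_contra h0
    have := hx ((e.re + 1) / e.im)
    rw [div_mul_cancel₀ _ h0] at this
    linarith
  have hre : 0 ≤ e.re := by simpa using hx 0
  have hn := Complex.normSq_pos.2 hg
  refine ⟨e.re / Complex.normSq (g.eval ρ), by positivity, ?_⟩
  have e1 : (e.re : ℂ) = e := Complex.ext rfl (by simp [him])
  have hn' : (Complex.normSq (g.eval ρ) : ℂ) ≠ 0 := by exact_mod_cast hn.ne'
  push_cast
  rw [e1, div_mul_eq_mul_div, eq_div_iff hn', he, Complex.normSq_eq_conj_mul_self]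
  ring

theorem Dissipative.cancel {D p : ℂ[X]} {ρ : ℂ}
    (h : Dissipative ((X - C ρ) * D) ((X - C ρ) * p)) : Dissipative D p := by
  have hne : ∀ y ≠ ρ, y.im * (D.eval y * (starRingEnd ℂ) (p.eval y)).im ≤ 0 := by
    intro y hy
    have := h y
    simp only [eval_mul, eval_sub, eval_X, eval_C, map_mul] at this
    have e : (y - ρ) * D.eval y * ((starRingEnd ℂ) (y - ρ) * (starRingEnd ℂ) (p.eval y)) =
      (Complex.normSq (y - ρ) : ℝ) * (D.eval y * (starRingEnd ℂ) (p.eval y)) := by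
      rw [Complex.normSq_eq_conj_mul_self]
      ring
    rw [e, Complex.im_ofReal_mul] at this
    have hn := Complex.normSq_pos.2 (sub_ne_zero.2 hy)
    by_contra! hcon
    nlinarith [mul_pos hn hcon]
  intro y
  have hc : Continuous fun t : ℝ ↦ (y.im + t) * (D.eval (y + t * Complex.I) *
      (starRingEnd ℂ) (p.eval (y + t * Complex.I)) * 1).im := by
    have := continuous_ray D p y Complex.I 1
    fun_prop
  by_cases hy : y = ρ
  · have h0 := nonpos_of_continuous_of_pos hc fun t ht ↦ ?_
    · simpa using h0
    · have := hne (y + t * Complex.I) (by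
        rw [hy, Ne, add_eq_left]
        simp [ht.ne'])
      simpa using this
  · exact hne y hy

theorem im_leading_nonpos {Q : ℂ[X]} {K : ℝ} (h : ∀ y : ℂ, y.im * (Q.eval y).im ≤ K) {u : ℂ}
    (hu : 0 < u.im) : (Q.leadingCoeff * u ^ Q.natDegree).im ≤ 0 := by
  have hu0 : u ≠ 0 := by
    rintro rfl
    simp at hu
  have hc : Continuous fun s : ℝ ↦ u.im * (Q.reverse.eval (s * u⁻¹) * u ^ Q.natDegree).im -
      K * s ^ (Q.natDegree + 1) := by
    fun_prop
  have h0 := nonpos_of_continuous_of_pos hc fun s hs ↦ ?_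
  · rw [Complex.ofReal_zero, zero_mul, ← coeff_zero_eq_eval_zero, coeff_zero_reverse,
      zero_pow (Nat.succ_ne_zero _), mul_zero, sub_zero] at h0
    exact nonpos_of_mul_nonpos_right h0 hu
  · have hs0 : (s : ℂ) ≠ 0 := by exact_mod_cast hs.ne'
    have hx : u / s ≠ 0 := div_ne_zero hu0 hs0
    let _ := invertibleOfNonzero hx
    have e := eval₂_reverse_mul_pow (RingHom.id ℂ) (u / s) Q
    rw [invOf_eq_inv, inv_div, div_eq_mul_inv, div_pow] at e
    have h1 := h (u / s)
    change eval _ _ * _ = eval _ _ at e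
    rw [← e, Complex.div_ofReal_im, ← mul_div_assoc, ← Complex.ofReal_pow,
      Complex.div_ofReal_im, div_mul_div_comm, ← pow_succ', div_le_iff₀ (by positivity)] at h1
    linarith

/-- A Nevanlinna polynomial is affine. -/
theorem affine_of_im_mul_le {Q : ℂ[X]} {K : ℝ} (h : ∀ y : ℂ, y.im * (Q.eval y).im ≤ K) :
    ∃ a b : ℝ, a ≤ 0 ∧ ∀ t : ℝ, (Q.eval (t : ℂ)).re = a * t + b := by
  have hdeg : Q.natDegree ≤ 1 := by
    by_contra! hd
    have hl : Q.leadingCoeff ≠ 0 := by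
      rw [Ne, leadingCoeff_eq_zero]
      rintro rfl
      simp at hd
    obtain ⟨u, hu, hu2⟩ := exists_im_pow_pos hl hd
    linarith [im_leading_nonpos h hu]
  refine ⟨(Q.coeff 1).re, (Q.coeff 0).re, ?_, fun t ↦ ?_⟩
  · rcases Nat.lt_or_ge Q.natDegree 1 with h1 | h1
    · rw [coeff_eq_zero_of_natDegree_lt h1]
      simp
    · have h2 : Q.natDegree = 1 := le_antisymm hdeg h1
      have := im_leading_nonpos h (u := Complex.I) (by simp)
      rw [leadingCoeff, h2] at this
      simpa using this
  · rw [eq_X_add_C_of_natDegree_le_one hdeg]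
    simp

theorem Dissipative.exists_residues_of_no_common_root {D p : ℂ[X]} (h : Dissipative D p)
    (hp : p ≠ 0) (hc : ∀ ρ, p.eval ρ = 0 → D.eval ρ ≠ 0) {ρ : ℂ} (hρ : p.eval ρ = 0) :
    ρ.im = 0 ∧ p.rootMultiplicity ρ = 1 ∧
      ∃ (g : ℂ[X]) (c : ℝ), p = (X - C ρ) * g ∧ 0 ≤ c ∧ D.eval ρ = c * g.eval ρ := by
  obtain ⟨g, hg, hdvd⟩ := exists_eq_pow_rootMultiplicity_mul_and_not_dvd p hp ρ
  have hg0 : g.eval ρ ≠ 0 := fun h0 ↦ hdvd (dvd_iff_isRoot.2 h0)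
  have hm : p.rootMultiplicity ρ ≠ 0 := by
    have := (rootMultiplicity_pos hp).2 hρ
    omega
  have h' := h
  rw [hg] at h'
  have him := h'.im_root_eq_zero hm (hc ρ hρ) hg0
  have h1 : p.rootMultiplicity ρ = 1 :=
    le_antisymm (h'.order_le_one (hc ρ hρ) hg0 him) (Nat.one_le_iff_ne_zero.2 hm)
  rw [h1, pow_one] at hg
  rw [hg] at h
  obtain ⟨c, hc0, hc1⟩ := h.residue_nonneg hg0 him
  exact ⟨him, h1, g, c, hg, hc0, hc1⟩

theorem Dissipative.partialFraction_of_no_common_root {D p : ℂ[X]} (h : Dissipative D p)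
    (hp : p ≠ 0) (hc : ∀ ρ, p.eval ρ = 0 → D.eval ρ ≠ 0) :
    ∃ (s : Finset ℂ) (c : ℂ → ℝ) (a b : ℝ), a ≤ 0 ∧
      (∀ ρ ∈ s, 0 ≤ c ρ ∧ ρ.im = 0 ∧ p.eval ρ = 0) ∧
      ∀ t : ℝ, p.eval (t : ℂ) ≠ 0 →
        (D.eval (t : ℂ) / p.eval (t : ℂ)).re = a * t + b + ∑ ρ ∈ s, c ρ / (t - ρ.re) := by
  classical
  have key := fun (ρ : ℂ) (hρ : p.eval ρ = 0) ↦ h.exists_residues_of_no_common_root hp hc hρ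
  choose! him hmul g c hg hc0 hD using key
  set s := p.roots.toFinset with hs
  have hmem : ∀ ρ, ρ ∈ s ↔ p.eval ρ = 0 := by
    intro ρ
    simp [hs, hp]
  have hnodup : p.roots.Nodup := by
    rw [Multiset.nodup_iff_count_le_one]
    intro ρ
    rw [count_roots]
    by_cases hρ : p.eval ρ = 0
    · exact (hmul ρ hρ).le
    · rw [rootMultiplicity_eq_zero hρ]
      omega
  set E := D - ∑ ρ ∈ s, C (c ρ : ℂ) * g ρ with hE
  have hgne : ∀ ρ ∈ s, ∀ y, (g ρ).eval y * (y - ρ) = p.eval y := by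
    intro ρ hρ y
    conv_rhs => rw [hg ρ ((hmem ρ).1 hρ)]
    simp [mul_comm]
  have hEroot : ∀ σ ∈ s, E.eval σ = 0 := by
    intro σ hσ
    rw [hE, eval_sub, eval_finsetSum, Finset.sum_eq_single_of_mem σ hσ, eval_mul, eval_C,
      hD σ ((hmem σ).1 hσ), sub_self]
    intro ρ hρ hne
    have := hgne ρ hρ σ
    rw [(hmem σ).1 hσ, mul_eq_zero, sub_eq_zero] at this
    rw [eval_mul, this.resolve_right hne.symm, mul_zero]
  have hdvd : p ∣ E := by
    by_cases hE0 : E = 0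
    · simp [hE0]
    refine (IsAlgClosed.splits p).dvd_of_roots_le_roots hp ?_
    rw [Multiset.le_iff_subset hnodup]
    intro ρ hρ
    rw [mem_roots hE0]
    exact hEroot ρ (by simpa [hs] using hρ)
  obtain ⟨Q, hQ⟩ := hdvd
  have hDe : ∀ y, D.eval y = p.eval y * Q.eval y + ∑ ρ ∈ s, (c ρ : ℂ) * (g ρ).eval y := by
    intro y
    have := congrArg (eval y) hQ
    rw [hE, eval_sub, eval_finsetSum, eval_mul] at this
    simp only [eval_mul, eval_C] at this
    rw [← this]
    ring
  have hQb : ∀ y : ℂ, y.im * (Q.eval y).im ≤ ∑ ρ ∈ s, c ρ := by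
    intro y
    have hC : 0 ≤ ∑ ρ ∈ s, c ρ := Finset.sum_nonneg fun ρ hρ ↦ hc0 ρ ((hmem ρ).1 hρ)
    by_cases hy : y.im = 0
    · simpa [hy] using hC
    have hpy : p.eval y ≠ 0 := fun h0 ↦ hy (him y h0)
    have h1 := h y
    have hterm : ∀ ρ ∈ s, ((c ρ : ℂ) * (g ρ).eval y * (starRingEnd ℂ) (p.eval y)).im =
        - (c ρ * Complex.normSq ((g ρ).eval y) * y.im) := by
      intro ρ hρ
      rw [← hgne ρ hρ y, map_mul]
      have : (c ρ : ℂ) * (g ρ).eval y * ((starRingEnd ℂ) ((g ρ).eval y) *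
        (starRingEnd ℂ) (y - ρ)) = (c ρ * Complex.normSq ((g ρ).eval y) : ℝ) *
        (starRingEnd ℂ) (y - ρ) := by
        push_cast
        rw [Complex.normSq_eq_conj_mul_self]
        ring
      rw [this, Complex.im_ofReal_mul, Complex.conj_im, Complex.sub_im, him ρ ((hmem ρ).1 hρ)]
      ring
    have hn := Complex.normSq_pos.2 hpy
    have h2 : (D.eval y * (starRingEnd ℂ) (p.eval y)).im = Complex.normSq (p.eval y) *
        (Q.eval y).im - ∑ ρ ∈ s, c ρ * Complex.normSq ((g ρ).eval y) * y.im := by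
      rw [hDe, add_mul, Finset.sum_mul, Complex.add_im, Complex.im_sum,
        Finset.sum_congr rfl hterm, Finset.sum_neg_distrib, ← sub_eq_add_neg,
        ← Complex.im_ofReal_mul, Complex.normSq_eq_conj_mul_self]
      congr 2
      ring
    have h3 : ∀ ρ ∈ s, c ρ * Complex.normSq ((g ρ).eval y) * y.im * y.im ≤
        c ρ * Complex.normSq (p.eval y) := by
      intro ρ hρ
      rw [← hgne ρ hρ y, Complex.normSq_mul, mul_assoc, mul_assoc]
      refine mul_le_mul_of_nonneg_left (mul_le_mul_of_nonneg_left ?_ (Complex.normSq_nonneg _))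
        (hc0 ρ ((hmem ρ).1 hρ))
      rw [Complex.normSq_apply, Complex.sub_im, him ρ ((hmem ρ).1 hρ)]
      nlinarith [mul_self_nonneg (y - ρ).re]
    have h4 := Finset.sum_le_sum h3
    rw [← Finset.sum_mul, ← Finset.sum_mul, ← Finset.sum_mul] at h4
    rw [h2, ← Finset.sum_mul] at h1
    by_contra! hcon
    nlinarith [mul_pos hn (sub_pos.2 hcon)]
  obtain ⟨a, b, ha, hab⟩ := affine_of_im_mul_le hQb
  refine ⟨s, c, a, b, ha, fun ρ hρ ↦ ⟨hc0 ρ ((hmem ρ).1 hρ), him ρ ((hmem ρ).1 hρ),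
    (hmem ρ).1 hρ⟩, fun t ht ↦ ?_⟩
  rw [hDe, add_div, mul_div_cancel_left₀ _ ht, Complex.add_re, hab, Finset.sum_div, Complex.re_sum]
  congr 1
  refine Finset.sum_congr rfl fun ρ hρ ↦ ?_
  have hg0 : (g ρ).eval (t : ℂ) ≠ 0 := by
    intro h0
    rw [← hgne ρ hρ, h0, zero_mul] at ht
    exact ht rfl
  rw [← hgne ρ hρ, mul_comm, mul_div_mul_left _ _ hg0]
  have : (t : ℂ) - ρ = ((t - ρ.re : ℝ) : ℂ) := by
    apply Complex.ext <;> simp [him ρ ((hmem ρ).1 hρ)]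
  rw [this, ← Complex.ofReal_div, Complex.ofReal_re]

theorem Dissipative.partialFraction {D p : ℂ[X]} (h : Dissipative D p) (hp : p ≠ 0) :
    ∃ (s : Finset ℂ) (c : ℂ → ℝ) (a b : ℝ), a ≤ 0 ∧
      (∀ ρ ∈ s, 0 ≤ c ρ ∧ ρ.im = 0 ∧ p.eval ρ = 0) ∧
      ∀ t : ℝ, p.eval (t : ℂ) ≠ 0 →
        (D.eval (t : ℂ) / p.eval (t : ℂ)).re = a * t + b + ∑ ρ ∈ s, c ρ / (t - ρ.re) := by
  induction hd : p.natDegree using Nat.strong_induction_on generalizing D p with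
  | _ d ih =>
  by_cases hc : ∀ ρ, p.eval ρ = 0 → D.eval ρ ≠ 0
  · exact h.partialFraction_of_no_common_root hp hc
  push Not at hc
  obtain ⟨ρ, hρ, hρD⟩ := hc
  obtain ⟨p', rfl⟩ := dvd_iff_isRoot.2 hρ
  obtain ⟨D', rfl⟩ := dvd_iff_isRoot.2 hρD
  have hp' : p' ≠ 0 := right_ne_zero_of_mul hp
  obtain ⟨s, c, a, b, ha, hs, hf⟩ := ih _ (by
    rw [← hd, natDegree_mul (X_sub_C_ne_zero ρ) hp', natDegree_X_sub_C]; omega) h.cancel hp' rfl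
  refine ⟨s, c, a, b, ha, fun σ hσ ↦ ⟨(hs σ hσ).1, (hs σ hσ).2.1, ?_⟩, fun t ht ↦ ?_⟩
  · rw [eval_mul, (hs σ hσ).2.2, mul_zero]
  · rw [eval_mul] at ht
    rw [eval_mul, eval_mul, mul_div_mul_left _ _ (left_ne_zero_of_mul ht),
      hf t (right_ne_zero_of_mul ht)]

theorem eval_ratio_hasDerivAt (D p : ℂ[X]) {t : ℝ} (ht : p.eval (t : ℂ) ≠ 0) :
    HasDerivAt (fun t : ℝ ↦ (D.eval (t : ℂ) / p.eval (t : ℂ)).re)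
      ((D.derivative.eval (t : ℂ) * p.eval (t : ℂ) - D.eval (t : ℂ) * p.derivative.eval (t : ℂ)) /
        p.eval (t : ℂ) ^ 2).re t :=
  HasDerivAt.real_of_complex (e := fun z ↦ D.eval z / p.eval z)
    ((D.hasDerivAt (t : ℂ)).div (p.hasDerivAt (t : ℂ)) ht)

theorem Dissipative.antitoneOn_ratio {D p : ℂ[X]} (h : Dissipative D p)
    (hp : ∀ t : ℝ, 0 ≤ t → p.eval (t : ℂ) ≠ 0) :
    AntitoneOn (fun t : ℝ ↦ (D.eval (t : ℂ) / p.eval (t : ℂ)).re) (Set.Ici 0) := by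
  have hp0 : p ≠ 0 := by
    rintro rfl
    simpa using hp 0 le_rfl
  obtain ⟨s, c, a, b, ha, hs, hf⟩ := h.partialFraction hp0
  intro t₁ ht₁ t₂ ht₂ h12
  simp only [hf _ (hp _ ht₁), hf _ (hp _ ht₂)]
  refine add_le_add (by nlinarith) (Finset.sum_le_sum fun ρ hρ ↦ ?_)
  obtain ⟨hc, him, hr⟩ := hs ρ hρ
  have hneg : ρ.re < 0 := by
    by_contra! h0
    refine hp _ h0 ?_
    rwa [show ((ρ.re : ℝ) : ℂ) = ρ from Complex.ext rfl (by simp [him])]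
  have : 0 ≤ t₁ := ht₁
  exact div_le_div_of_nonneg_left hc (by linarith) (by linarith)

theorem Dissipative.ratio_convexity {D p : ℂ[X]} (h : Dissipative D p)
    (hp : ∀ t : ℝ, 0 ≤ t → p.eval (t : ℂ) ≠ 0) {d : ℝ} (hd : 0 ≤ d) :
    ((D.derivative.eval (d : ℂ) * p.eval (d : ℂ) -
      D.eval (d : ℂ) * p.derivative.eval (d : ℂ)) / p.eval (d : ℂ) ^ 2).re ≤ 0 ∧
    (D.eval (d : ℂ) / p.eval (d : ℂ)).re -
      d * ((D.derivative.eval (d : ℂ) * p.eval (d : ℂ) -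
        D.eval (d : ℂ) * p.derivative.eval (d : ℂ)) / p.eval (d : ℂ) ^ 2).re ≤
      (D.eval 0 / p.eval 0).re := by
  have hp0 : p ≠ 0 := by
    rintro rfl
    simpa using hp 0 le_rfl
  obtain ⟨s, c, a, b, ha, hs, hf⟩ := h.partialFraction hp0
  have hneg : ∀ ρ ∈ s, ρ.re < 0 := by
    intro ρ hρ
    by_contra! h0
    refine hp _ h0 ?_
    rw [show ((ρ.re : ℝ) : ℂ) = ρ from Complex.ext rfl (by simp [(hs ρ hρ).2.1])]
    exact (hs ρ hρ).2.2
  have hder : HasDerivAt (fun t : ℝ ↦ a * t + b + ∑ ρ ∈ s, c ρ / (t - ρ.re))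
      (a + ∑ ρ ∈ s, -(c ρ / (d - ρ.re) ^ 2)) d := by
    have h1 : HasDerivAt (fun t : ℝ ↦ a * t + b) a d := by
      simpa using ((hasDerivAt_id d).const_mul a).add_const b
    refine h1.add (HasDerivAt.fun_sum fun ρ hρ ↦ ?_)
    have hne : d - ρ.re ≠ 0 := by linarith [hneg ρ hρ]
    refine ((hasDerivAt_const d (c ρ)).div ((hasDerivAt_id d).sub_const ρ.re) hne).congr_deriv ?_
    simp [neg_div]
  have hev : (fun t : ℝ ↦ (D.eval (t : ℂ) / p.eval (t : ℂ)).re) =ᶠ[𝓝 d]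
      fun t : ℝ ↦ a * t + b + ∑ ρ ∈ s, c ρ / (t - ρ.re) := by
    have hc : Continuous fun t : ℝ ↦ p.eval (t : ℂ) := by fun_prop
    filter_upwards [hc.continuousAt.eventually_ne (hp d hd)] with t ht using hf t ht
  have h0 := hf 0 (hp 0 le_rfl)
  rw [Complex.ofReal_zero] at h0
  rw [(eval_ratio_hasDerivAt D p (hp d hd)).unique (hder.congr_of_eventuallyEq hev),
    hf d (hp d hd), h0, mul_add, Finset.mul_sum]
  constructor
  · refine add_nonpos ha (Finset.sum_nonpos fun ρ hρ ↦ neg_nonpos.2 ?_)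
    exact div_nonneg (hs ρ hρ).1 (sq_nonneg _)
  have : ∑ ρ ∈ s, c ρ / (d - ρ.re) - ∑ ρ ∈ s, d * -(c ρ / (d - ρ.re) ^ 2) ≤
      ∑ ρ ∈ s, c ρ / (0 - ρ.re) := by
    rw [← Finset.sum_sub_distrib]
    refine Finset.sum_le_sum fun ρ hρ ↦ ?_
    have hρ0 := hneg ρ hρ
    have hx : 0 < d - ρ.re := by linarith
    have hy : 0 < 0 - ρ.re := by linarith
    have e : c ρ / (d - ρ.re) - d * -(c ρ / (d - ρ.re) ^ 2) =
        c ρ * ((d - ρ.re + d) / (d - ρ.re) ^ 2) := by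
      field_simp
      ring
    rw [e, div_eq_mul_inv (c ρ) (0 - ρ.re), ← one_div]
    refine mul_le_mul_of_nonneg_left ?_ (hs ρ hρ).1
    rw [div_le_div_iff₀ (by positivity) hy]
    nlinarith [sq_nonneg d]
  linarith

end

section

open Filter Topology
open Polynomial (Splits)

variable {σ : Type*}

/-- The derivative in the direction of a real vector. -/
noncomputable def dirDeriv (w : σ → ℝ) :
    Derivation ℂ (MvPolynomial σ ℂ) (MvPolynomial σ ℂ) :=
  MvPolynomial.mkDerivation ℂ fun i ↦ MvPolynomial.C (w i : ℂ)

theorem dirDeriv_X (w : σ → ℝ) (i : σ) :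
    dirDeriv w (MvPolynomial.X i) = MvPolynomial.C (w i : ℂ) :=
  MvPolynomial.mkDerivation_X _ _ _

theorem dirDeriv_comm (w u : σ → ℝ) (P : MvPolynomial σ ℂ) :
    dirDeriv w (dirDeriv u P) = dirDeriv u (dirDeriv w P) := by
  have : ⁅dirDeriv w, dirDeriv u⁆ = (0 : Derivation ℂ _ (MvPolynomial σ ℂ)) := by
    refine MvPolynomial.derivation_ext fun i ↦ ?_
    simp [Derivation.commutator_apply, dirDeriv_X]
  have h := congrArg (· P) this
  simpa [Derivation.commutator_apply, sub_eq_zero] using h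

theorem dirDeriv_map_conj (w : σ → ℝ) (P : MvPolynomial σ ℂ) :
    dirDeriv w (MvPolynomial.map (starRingEnd ℂ) P) =
      MvPolynomial.map (starRingEnd ℂ) (dirDeriv w P) := by
  induction P using MvPolynomial.induction_on with
  | C a => simp
  | add p q hp hq => simp [hp, hq]
  | mul_X p i hp => simp [Derivation.leibniz, hp, dirDeriv_X]

theorem dirDeriv_sum {ι : Type*} (s : Finset ι) (c : ι → ℝ) (w : ι → σ → ℝ)
    (P : MvPolynomial σ ℂ) :
    dirDeriv (fun a ↦ ∑ i ∈ s, c i * w i a) P = ∑ i ∈ s, (c i : ℂ) • dirDeriv (w i) P := by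
  induction P using MvPolynomial.induction_on with
  | C a => simp
  | add p q hp hq => simp [hp, hq, Finset.sum_add_distrib]
  | mul_X p i hp =>
    simp only [Derivation.leibniz, hp, dirDeriv_X, smul_eq_mul, smul_add, Finset.sum_add_distrib,
      Finset.mul_sum, Complex.ofReal_sum, Complex.ofReal_mul, map_sum, map_mul,
      MvPolynomial.smul_eq_C_mul]
    congr 1 <;> refine Finset.sum_congr rfl fun j _ ↦ ?_ <;> ring

/-- The restriction of a polynomial to the line `t ↦ z + t w`. -/
noncomputable def lineRestrict (z : σ → ℂ) (w : σ → ℝ) : MvPolynomial σ ℂ →ₐ[ℂ] Polynomial ℂ :=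
  MvPolynomial.aeval fun i ↦ Polynomial.C (z i) + Polynomial.C (w i : ℂ) * Polynomial.X

theorem eval_lineRestrict (z : σ → ℂ) (w : σ → ℝ) (P : MvPolynomial σ ℂ) (t : ℂ) :
    (lineRestrict z w P).eval t = MvPolynomial.eval (fun i ↦ z i + t * w i) P := by
  induction P using MvPolynomial.induction_on with
  | C a => simp [lineRestrict]
  | add p q hp hq => simp [hp, hq]
  | mul_X p i hp =>
    rw [map_mul, Polynomial.eval_mul, hp, map_mul, MvPolynomial.eval_X]
    simp only [lineRestrict, MvPolynomial.aeval_X, Polynomial.eval_add, Polynomial.eval_mul,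
      Polynomial.eval_C, Polynomial.eval_X]
    ring

theorem derivative_lineRestrict (z : σ → ℂ) (w : σ → ℝ) (P : MvPolynomial σ ℂ) :
    (lineRestrict z w P).derivative = lineRestrict z w (dirDeriv w P) := by
  induction P using MvPolynomial.induction_on with
  | C a => simp [lineRestrict]
  | add p q hp hq => simp [hp, hq]
  | mul_X p i hp =>
    rw [map_mul, Polynomial.derivative_mul, hp, Derivation.leibniz, dirDeriv_X]
    simp only [lineRestrict, smul_eq_mul, map_add, map_mul, MvPolynomial.aeval_X,
      MvPolynomial.aeval_C, Polynomial.derivative_mul, Polynomial.derivative_C,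
      Polynomial.derivative_X, Polynomial.algebraMap_eq]
    ring

/-- Real stable polynomials. -/
structure RealStable (P : MvPolynomial σ ℂ) : Prop where
  eval_ne_zero : ∀ z : σ → ℂ, (∀ i, 0 < (z i).im) → MvPolynomial.eval z P ≠ 0
  map_conj : MvPolynomial.map (starRingEnd ℂ) P = P

theorem eval_conj_of_real {P : MvPolynomial σ ℂ} (h : MvPolynomial.map (starRingEnd ℂ) P = P)
    (z : σ → ℂ) : MvPolynomial.eval (fun i ↦ (starRingEnd ℂ) (z i)) P =
      (starRingEnd ℂ) (MvPolynomial.eval z P) := by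
  nth_rewrite 1 [← h]
  exact (MvPolynomial.map_eval (starRingEnd ℂ) z P).symm

theorem RealStable.dirDeriv_ratio {P : MvPolynomial σ ℂ} (h : RealStable P) {w : σ → ℝ}
    (hw : 0 ≤ w) {z : σ → ℂ} (hz : ∀ i, 0 < (z i).im) :
    MvPolynomial.eval z (dirDeriv w P) / MvPolynomial.eval z P = 0 ∨
      (MvPolynomial.eval z (dirDeriv w P) / MvPolynomial.eval z P).im < 0 := by
  have he : ∀ Q, (lineRestrict z w Q).eval 0 = MvPolynomial.eval z Q := by
    simp [eval_lineRestrict]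
  have hsum := (IsAlgClosed.splits (lineRestrict z w P)).eval_derivative_div_eval_of_ne_zero
    (x := 0) (by rw [he]; exact h.eval_ne_zero z hz)
  rw [derivative_lineRestrict, he, he] at hsum
  rw [hsum]
  have hroot : ∀ ρ ∈ (lineRestrict z w P).roots, ρ.im < 0 := by
    intro ρ hρ
    by_contra! h0
    refine h.eval_ne_zero (fun i ↦ z i + ρ * w i) (fun i ↦ ?_) ?_
    · have := mul_nonneg h0 (hw i)
      simpa using add_pos_of_pos_of_nonneg (hz i) this
    · rw [← eval_lineRestrict]
      exact Polynomial.isRoot_of_mem_roots hρ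
  have hterm : ∀ ρ : ℂ, ρ.im < 0 → (1 / (0 - ρ)).im < 0 := by
    intro ρ hρ
    have hρ0 : ρ ≠ 0 := by
      rintro rfl
      simp at hρ
    have := Complex.normSq_pos.2 hρ0
    rw [zero_sub, one_div, Complex.inv_im, Complex.normSq_neg, Complex.neg_im, neg_neg]
    exact div_neg_of_neg_of_pos hρ this
  generalize (lineRestrict z w P).roots = R at hroot
  induction R using Multiset.induction with
  | empty => simp
  | cons ρ R ih =>
    right
    rw [Multiset.map_cons, Multiset.sum_cons, Complex.add_im]
    have h1 := hterm ρ (hroot ρ (Multiset.mem_cons_self _ _))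
    rcases ih fun ρ' h' ↦ hroot ρ' (Multiset.mem_cons_of_mem h') with h2 | h2
    · rw [h2]
      simpa using h1
    · linarith

/-- The operator `1 - ∂_w`. -/
noncomputable def shiftOp (w : σ → ℝ) (P : MvPolynomial σ ℂ) : MvPolynomial σ ℂ :=
  P - dirDeriv w P

theorem dirDeriv_shiftOp (u w : σ → ℝ) (P : MvPolynomial σ ℂ) :
    dirDeriv u (shiftOp w P) = shiftOp w (dirDeriv u P) := by
  rw [shiftOp, shiftOp, map_sub, dirDeriv_comm]

theorem shiftOp_comm (u w : σ → ℝ) (P : MvPolynomial σ ℂ) :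
    shiftOp u (shiftOp w P) = shiftOp w (shiftOp u P) := by
  rw [shiftOp, dirDeriv_shiftOp]
  simp only [shiftOp, map_sub]
  ring

protected theorem RealStable.shiftOp {P : MvPolynomial σ ℂ} (h : RealStable P) {w : σ → ℝ}
    (hw : 0 ≤ w) : RealStable (shiftOp w P) where
  eval_ne_zero z hz h0 := by
    rw [shiftOp, map_sub, sub_eq_zero] at h0
    have := h.dirDeriv_ratio hw hz
    rw [← h0, div_self (h.eval_ne_zero z hz)] at this
    simp at this
  map_conj := by
    rw [shiftOp, map_sub, ← dirDeriv_map_conj, h.map_conj]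

theorem RealStable.im_mul_conj_nonpos {P : MvPolynomial σ ℂ} (h : RealStable P) {u : σ → ℝ}
    (hu : 0 ≤ u) {z : σ → ℂ} (hz : ∀ i, 0 ≤ (z i).im) :
    (MvPolynomial.eval z (dirDeriv u P) * (starRingEnd ℂ) (MvPolynomial.eval z P)).im ≤ 0 := by
  have hc : Continuous fun t : ℝ ↦
      (MvPolynomial.eval (fun i ↦ z i + t * Complex.I) (dirDeriv u P) *
      (starRingEnd ℂ) (MvPolynomial.eval (fun i ↦ z i + t * Complex.I) P)).im := by
    have h1 : ∀ Q : MvPolynomial σ ℂ, Continuous fun t : ℝ ↦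
        MvPolynomial.eval (fun i ↦ z i + t * Complex.I) Q := fun Q ↦
      (MvPolynomial.continuous_eval Q).comp (by fun_prop)
    exact Complex.continuous_im.comp ((h1 _).mul (Complex.continuous_conj.comp (h1 _)))
  have h0 := nonpos_of_continuous_of_pos hc fun t ht ↦ ?_
  · simpa using h0
  · have hz' : ∀ i, 0 < (z i + t * Complex.I).im := fun i ↦ by
      simpa using add_pos_of_nonneg_of_pos (hz i) ht
    have hP := h.eval_ne_zero _ hz'
    have hr := h.dirDeriv_ratio hu hz'
    set D := MvPolynomial.eval (fun i ↦ z i + t * Complex.I) (dirDeriv u P)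
    set p := MvPolynomial.eval (fun i ↦ z i + t * Complex.I) P
    have e : D * (starRingEnd ℂ) p = (Complex.normSq p : ℝ) * (D / p) := by
      rw [Complex.normSq_eq_conj_mul_self]
      field_simp
    rw [e, Complex.im_ofReal_mul]
    have hn := Complex.normSq_nonneg p
    rcases hr with hr | hr
    · rw [hr]
      simp
    · nlinarith

theorem RealStable.dissipative {P : MvPolynomial σ ℂ} (h : RealStable P) {u w : σ → ℝ}
    (hu : 0 ≤ u) (hw : 0 ≤ w) (z : σ → ℝ) :
    Dissipative (lineRestrict (fun i ↦ z i) w (dirDeriv u P)) (lineRestrict (fun i ↦ z i) w P) := by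
  have key : ∀ y : ℂ, 0 ≤ y.im →
      (MvPolynomial.eval (fun i ↦ (z i : ℂ) + y * w i) (dirDeriv u P) *
        (starRingEnd ℂ) (MvPolynomial.eval (fun i ↦ (z i : ℂ) + y * w i) P)).im ≤ 0 :=
    fun y hy ↦ h.im_mul_conj_nonpos hu fun i ↦ by simpa using mul_nonneg hy (hw i)
  have hreal : MvPolynomial.map (starRingEnd ℂ) (dirDeriv u P) = dirDeriv u P := by
    rw [← dirDeriv_map_conj, h.map_conj]
  intro y
  rw [eval_lineRestrict, eval_lineRestrict]
  rcases le_total 0 y.im with hy | hy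
  · exact mul_nonpos_of_nonneg_of_nonpos hy (key y hy)
  · have h1 := key ((starRingEnd ℂ) y) (by simpa using hy)
    have e : (fun i ↦ (z i : ℂ) + (starRingEnd ℂ) y * w i) =
        fun i ↦ (starRingEnd ℂ) ((z i : ℂ) + y * w i) := by
      ext i
      simp
    rw [e, eval_conj_of_real hreal, eval_conj_of_real h.map_conj, ← map_mul, Complex.conj_im] at h1
    nlinarith

end

section

open Filter Topology

variable {σ : Type*}

/-- The real part of the value of a polynomial at a real point. -/
noncomputable def realEval (z : σ → ℝ) (P : MvPolynomial σ ℂ) : ℝ :=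
  (MvPolynomial.eval (fun i ↦ (z i : ℂ)) P).re

theorem realEval_shiftOp (z w : σ → ℝ) (P : MvPolynomial σ ℂ) :
    realEval z (shiftOp w P) = realEval z P - realEval z (dirDeriv w P) := by
  simp [realEval, shiftOp]

theorem ofReal_realEval {P : MvPolynomial σ ℂ} (h : MvPolynomial.map (starRingEnd ℂ) P = P)
    (z : σ → ℝ) : (realEval z P : ℂ) = MvPolynomial.eval (fun i ↦ (z i : ℂ)) P := by
  have := eval_conj_of_real h fun i ↦ (z i : ℂ)
  simp only [Complex.conj_ofReal] at this
  exact Complex.conj_eq_iff_re.1 this.symm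

theorem map_conj_dirDeriv {P : MvPolynomial σ ℂ} (h : MvPolynomial.map (starRingEnd ℂ) P = P)
    (u : σ → ℝ) : MvPolynomial.map (starRingEnd ℂ) (dirDeriv u P) = dirDeriv u P := by
  rw [← dirDeriv_map_conj, h]

theorem eval_lineRestrict_ofReal {P : MvPolynomial σ ℂ}
    (h : MvPolynomial.map (starRingEnd ℂ) P = P) (z w : σ → ℝ) (t : ℝ) :
    (lineRestrict (fun i ↦ z i) w P).eval (t : ℂ) = (realEval (z + t • w) P : ℂ) := by
  rw [eval_lineRestrict, ofReal_realEval h]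
  simp

theorem continuous_realEval_line (P : MvPolynomial σ ℂ) (z w : σ → ℝ) :
    Continuous fun t : ℝ ↦ realEval (z + t • w) P :=
  Complex.continuous_re.comp ((MvPolynomial.continuous_eval P).comp (by fun_prop))

theorem RealStable.antitoneOn_ratio {P : MvPolynomial σ ℂ} (h : RealStable P) {u w : σ → ℝ}
    (hu : 0 ≤ u) (hw : 0 ≤ w) {z : σ → ℝ} (hP : ∀ t : ℝ, 0 ≤ t → realEval (z + t • w) P ≠ 0) :
    AntitoneOn (fun t : ℝ ↦ realEval (z + t • w) (dirDeriv u P) / realEval (z + t • w) P)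
      (Set.Ici 0) := by
  have := (h.dissipative hu hw z).antitoneOn_ratio fun t ht ↦ by
    rw [eval_lineRestrict_ofReal h.map_conj]
    exact_mod_cast hP t ht
  simpa only [eval_lineRestrict_ofReal h.map_conj,
    eval_lineRestrict_ofReal (map_conj_dirDeriv h.map_conj u), ← Complex.ofReal_div,
    Complex.ofReal_re] using this

theorem RealStable.ratio_convexity {P : MvPolynomial σ ℂ} (h : RealStable P) {u w : σ → ℝ}
    (hu : 0 ≤ u) (hw : 0 ≤ w) {z : σ → ℝ} (hP : ∀ t : ℝ, 0 ≤ t → realEval (z + t • w) P ≠ 0)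
    {d : ℝ} (hd : 0 ≤ d) {a b c e : ℝ} (ha : realEval (z + d • w) P = a)
    (hb : realEval (z + d • w) (dirDeriv u P) = b) (hc : realEval (z + d • w) (dirDeriv w P) = c)
    (he : realEval (z + d • w) (dirDeriv w (dirDeriv u P)) = e) :
    (e * a - b * c) / a ^ 2 ≤ 0 ∧
      b / a - d * ((e * a - b * c) / a ^ 2) ≤ realEval z (dirDeriv u P) / realEval z P := by
  have := (h.dissipative hu hw z).ratio_convexity (fun t ht ↦ by
    rw [eval_lineRestrict_ofReal h.map_conj]
    exact_mod_cast hP t ht) hd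
  have hu' := map_conj_dirDeriv h.map_conj u
  rw [← Complex.ofReal_zero] at this
  simp only [derivative_lineRestrict, eval_lineRestrict_ofReal h.map_conj,
    eval_lineRestrict_ofReal hu', eval_lineRestrict_ofReal (map_conj_dirDeriv h.map_conj w),
    eval_lineRestrict_ofReal (map_conj_dirDeriv hu' w), ← Complex.ofReal_div,
    ← Complex.ofReal_mul, ← Complex.ofReal_sub, ← Complex.ofReal_pow, Complex.ofReal_re,
    ha, hb, hc, he, zero_smul, add_zero] at this
  exact this

/-- `z` lies above the real zeros of `P`. -/
def IsAbove (z : σ → ℝ) (P : MvPolynomial σ ℂ) : Prop :=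
  ∀ y : σ → ℝ, 0 ≤ y → 0 < realEval (z + y) P

theorem IsAbove.pos {z : σ → ℝ} {P : MvPolynomial σ ℂ} (h : IsAbove z P) : 0 < realEval z P := by
  simpa using h 0 le_rfl

theorem IsAbove.mono {z : σ → ℝ} {P : MvPolynomial σ ℂ} (h : IsAbove z P) {y : σ → ℝ}
    (hy : 0 ≤ y) : IsAbove (z + y) P := fun x hx ↦ by
  rw [add_assoc]
  exact h _ (add_nonneg hy hx)

theorem IsAbove.line_ne {z : σ → ℝ} {P : MvPolynomial σ ℂ} (h : IsAbove z P) {w : σ → ℝ}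
    (hw : 0 ≤ w) (t : ℝ) (ht : 0 ≤ t) : realEval (z + t • w) P ≠ 0 :=
  (h _ (smul_nonneg ht hw)).ne'

theorem RealStable.ratio_le {P : MvPolynomial σ ℂ} (h : RealStable P) {u y : σ → ℝ}
    (hu : 0 ≤ u) (hy : 0 ≤ y) {z : σ → ℝ} (hz : IsAbove z P) :
    realEval (z + y) (dirDeriv u P) / realEval (z + y) P ≤
      realEval z (dirDeriv u P) / realEval z P := by
  have := h.antitoneOn_ratio hu hy (hz.line_ne hy) (Set.mem_Ici.2 le_rfl)
    (Set.mem_Ici.2 zero_le_one) zero_le_one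
  simpa using this

theorem RealStable.shiftOp_ge {P : MvPolynomial σ ℂ} (h : RealStable P) {w : σ → ℝ}
    (hw : 0 ≤ w) {z : σ → ℝ} (hz : IsAbove z P) {d : ℝ}
    (hb : realEval z (dirDeriv w P) / realEval z P ≤ 1 - 1 / d) {y : σ → ℝ} (hy : 0 ≤ y) :
    realEval (z + y) P / d ≤ realEval (z + y) (shiftOp w P) := by
  have h1 := (h.ratio_le hw hy hz).trans hb
  rw [div_le_iff₀ (hz y hy)] at h1
  rw [realEval_shiftOp, div_eq_mul_one_div]
  linarith

theorem RealStable.isAbove_shiftOp {P : MvPolynomial σ ℂ} (h : RealStable P) {w : σ → ℝ}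
    (hw : 0 ≤ w) {z : σ → ℝ} (hz : IsAbove z P) {d : ℝ} (hd : 0 < d)
    (hb : realEval z (dirDeriv w P) / realEval z P ≤ 1 - 1 / d) : IsAbove z (shiftOp w P) :=
  fun y hy ↦ (div_pos (hz y hy) hd).trans_le (h.shiftOp_ge hw hz hb hy)

/-- The barrier step of Marcus, Spielman and Srivastava. -/
theorem RealStable.barrier_shiftOp {P : MvPolynomial σ ℂ} (h : RealStable P) {u w : σ → ℝ}
    (hu : 0 ≤ u) (hw : 0 ≤ w) {z : σ → ℝ} (hz : IsAbove z P) {d : ℝ} (hd : 0 < d)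
    (hb : realEval z (dirDeriv w P) / realEval z P ≤ 1 - 1 / d) :
    realEval (z + d • w) (dirDeriv u (shiftOp w P)) /
      realEval (z + d • w) (shiftOp w P) ≤ realEval z (dirDeriv u P) / realEval z P := by
  have hdw : 0 ≤ d • w := smul_nonneg hd.le hw
  have hge := h.shiftOp_ge hw hz hb hdw
  rw [dirDeriv_shiftOp, realEval_shiftOp, realEval_shiftOp]
  rw [realEval_shiftOp] at hge
  have ha := hz _ hdw
  obtain ⟨h1, h2⟩ := h.ratio_convexity hu hw (hz.line_ne hw) hd.le rfl rfl rfl rfl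
  set a := realEval (z + d • w) P
  set b := realEval (z + d • w) (dirDeriv u P)
  set c := realEval (z + d • w) (dirDeriv w P)
  set e := realEval (z + d • w) (dirDeriv w (dirDeriv u P))
  refine le_trans ?_ h2
  have hac : 0 < a - c := (div_pos ha hd).trans_le hge
  have e1 : (b - e) / (a - c) = b / a - a / (a - c) * ((e * a - b * c) / a ^ 2) := by
    field_simp
    ring
  have h3 : a / (a - c) ≤ d := by
    rw [div_le_iff₀ hac]
    rw [div_le_iff₀ hd] at hge
    linarith
  rw [e1]
  nlinarith

/-- The composition of the operators `1 - ∂_w` over a list of directions. -/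
noncomputable def shiftList (l : List (σ → ℝ)) (P : MvPolynomial σ ℂ) : MvPolynomial σ ℂ :=
  l.foldr shiftOp P

theorem shiftList_cons (w : σ → ℝ) (l : List (σ → ℝ)) (P : MvPolynomial σ ℂ) :
    shiftList (w :: l) P = shiftOp w (shiftList l P) := rfl

theorem shiftList_shiftOp (w : σ → ℝ) (l : List (σ → ℝ)) (P : MvPolynomial σ ℂ) :
    shiftList l (shiftOp w P) = shiftOp w (shiftList l P) := by
  induction l with
  | nil => rfl
  | cons u l ih => rw [shiftList_cons, shiftList_cons, ih, shiftOp_comm]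

protected theorem RealStable.shiftList {P : MvPolynomial σ ℂ} (h : RealStable P) {l : List (σ → ℝ)}
    (hl : ∀ w ∈ l, 0 ≤ w) : RealStable (shiftList l P) := by
  induction l with
  | nil => exact h
  | cons u l ih =>
    exact (ih fun w hw ↦ hl w (List.mem_cons_of_mem _ hw)).shiftOp (hl u List.mem_cons_self)

theorem RealStable.isAbove_shiftList {P : MvPolynomial σ ℂ} (h : RealStable P)
    {l : List (σ → ℝ)} (hl : ∀ w ∈ l, 0 ≤ w) {z : σ → ℝ} (hz : IsAbove z P) {d : ℝ} (hd : 0 < d)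
    (hb : ∀ w ∈ l, realEval z (dirDeriv w P) / realEval z P ≤ 1 - 1 / d) :
    IsAbove (z + d • l.sum) (shiftList l P) := by
  induction l generalizing P z with
  | nil => simpa [shiftList] using hz
  | cons w l ih =>
    rw [List.forall_mem_cons] at hl hb
    have := ih (h.shiftOp hl.1) hl.2 ((h.isAbove_shiftOp hl.1 hz hd hb.1).mono
      (smul_nonneg hd.le hl.1)) fun u hu ↦
        (h.barrier_shiftOp (hl.2 u hu) hl.1 hz hd hb.1).trans (hb.2 u hu)
    rwa [shiftList_shiftOp, add_assoc, ← smul_add, ← List.sum_cons] at this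

theorem exists_last_nonpos {g : ℝ → ℝ} (hg : Continuous g) {x₀ x : ℝ}
    (hpos : ∀ y, x₀ < y → 0 < g y) (hx : g x ≤ 0) :
    ∃ x₁, x ≤ x₁ ∧ g x₁ = 0 ∧ ∀ y, x₁ < y → 0 < g y := by
  have hx₀ : x ≤ x₀ := by
    by_contra! h
    exact absurd hx (hpos x h).not_ge
  have hcomp : IsCompact (Set.Icc x x₀ ∩ g ⁻¹' Set.Iic 0) :=
    isCompact_Icc.inter_right (isClosed_Iic.preimage hg)
  obtain ⟨x₁, ⟨h1, h2⟩, hmax⟩ := hcomp.exists_isGreatest ⟨x, ⟨le_rfl, hx₀⟩, hx⟩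
  have hafter : ∀ y, x₁ < y → 0 < g y := by
    intro y hy
    by_contra! h
    refine absurd (hmax ⟨⟨h1.1.trans hy.le, ?_⟩, h⟩) hy.not_ge
    by_contra! h'
    exact absurd h (hpos y h').not_ge
  refine ⟨x₁, h1.1, le_antisymm h2 ?_, hafter⟩
  refine ge_of_tendsto (hg.continuousWithinAt (s := Set.Ioi x₁) (x := x₁)) ?_
  filter_upwards [self_mem_nhdsWithin] with t ht using (hafter t ht).le

theorem RealStable.ratio_antitone_ray {P : MvPolynomial σ ℂ} (h : RealStable P)
    {u e : σ → ℝ} (hu : 0 ≤ u) (he : 0 ≤ e) {x y : ℝ}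
    (hP : ∀ t, x ≤ t → 0 < realEval (t • e) P) (hxy : x ≤ y) :
    realEval (y • e) (dirDeriv u P) / realEval (y • e) P ≤
      realEval (x • e) (dirDeriv u P) / realEval (x • e) P := by
  have h1 := h.antitoneOn_ratio hu he (z := x • e) (fun t ht ↦ by
    rw [← add_smul]
    exact (hP _ (by linarith)).ne') (Set.mem_Ici.2 le_rfl)
    (Set.mem_Ici.2 (sub_nonneg.2 hxy)) (sub_nonneg.2 hxy)
  simpa [← add_smul] using h1

theorem continuous_realEval_smul (P : MvPolynomial σ ℂ) (e : σ → ℝ) :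
    Continuous fun t : ℝ ↦ realEval (t • e) P := by
  simpa using continuous_realEval_line P 0 e

theorem RealStable.pos_of_shiftOp_pos {P : MvPolynomial σ ℂ} (h : RealStable P)
    {w e : σ → ℝ} (hw : 0 ≤ w) (he : 0 ≤ e) {x₀ b : ℝ}
    (hlarge : ∀ x, x₀ < x → 0 < realEval (x • e) P)
    (hT : ∀ x : ℝ, b < x → 0 < realEval (x • e) (shiftOp w P)) {x : ℝ} (hx : b < x) :
    0 < realEval (x • e) P := by
  by_contra! hneg
  obtain ⟨x₁, hx₁, h0, hpos⟩ := exists_last_nonpos (continuous_realEval_smul P e) hlarge hneg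
  have hD : realEval (x₁ • e) (dirDeriv w P) < 0 := by
    have := hT x₁ (hx.trans_le hx₁)
    rw [realEval_shiftOp, h0] at this
    linarith
  set q := realEval ((x₁ + 1) • e) (dirDeriv w P) / realEval ((x₁ + 1) • e) P with hq
  have hc : Continuous fun t : ℝ ↦
      q * realEval (t • e) P - realEval (t • e) (dirDeriv w P) :=
    (continuous_const.mul (continuous_realEval_smul P e)).sub
      (continuous_realEval_smul _ e)
  have hle : q * realEval (x₁ • e) P - realEval (x₁ • e) (dirDeriv w P) ≤ 0 := by
    refine le_of_tendsto (hc.continuousWithinAt (s := Set.Ioi x₁) (x := x₁)) ?_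
    filter_upwards [Ioo_mem_nhdsGT (lt_add_one x₁)] with t ht
    have := h.ratio_antitone_ray hw he (fun s hs ↦ hpos s (ht.1.trans_le hs)) ht.2.le
    rw [← hq, le_div_iff₀ (hpos t ht.1)] at this
    linarith
  rw [h0] at hle
  linarith

theorem RealStable.exists_shiftOp_pos {K : Type*} [Fintype K] [Nonempty K]
    {P : MvPolynomial σ ℂ} (h : RealStable P) {p : K → ℝ} (hp : 0 ≤ p) (hp1 : ∑ k, p k = 1)
    {u : K → σ → ℝ} (hu : 0 ≤ u) {e : σ → ℝ} (he : 0 ≤ e) {x₀ b : ℝ}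
    (hlarge : ∀ x, x₀ < x → 0 < realEval (x • e) P)
    (hT : ∀ x : ℝ, b < x → 0 < realEval (x • e) (shiftOp (fun a ↦ ∑ k, p k * u k a) P)) :
    ∃ k, ∀ x, b < x → 0 < realEval (x • e) (shiftOp (u k) P) := by
  have hw : 0 ≤ fun a ↦ ∑ k, p k * u k a := fun a ↦
    Finset.sum_nonneg fun k _ ↦ mul_nonneg (hp k) (hu k a)
  have hpos : ∀ x, b < x → 0 < realEval (x • e) P := fun x hx ↦
    h.pos_of_shiftOp_pos hw he hlarge hT hx
  by_contra! hcon
  choose x hx hxle using hcon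
  obtain ⟨k₀, hk₀⟩ := Finite.exists_min x
  have hge : ∀ k, realEval (x k₀ • e) P ≤ realEval (x k₀ • e) (dirDeriv (u k) P) := by
    intro k
    have h1 := h.ratio_antitone_ray (hu k) he
      (fun t ht ↦ hpos t ((hx k₀).trans_le ht)) (hk₀ k)
    have h2 := hxle k
    rw [realEval_shiftOp, sub_nonpos, ← one_le_div (hpos _ (hx k))] at h2
    rw [← one_le_div (hpos _ (hx k₀))]
    exact h2.trans h1
  have h3 := hT _ (hx k₀)
  rw [realEval_shiftOp, dirDeriv_sum] at h3
  have e1 : realEval (x k₀ • e) (∑ k, (p k : ℂ) • dirDeriv (u k) P) =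
      ∑ k, p k * realEval (x k₀ • e) (dirDeriv (u k) P) := by
    simp only [realEval, map_sum, MvPolynomial.smul_eval, Complex.re_sum, Complex.re_ofReal_mul]
  have h4 : ∑ k, p k * realEval (x k₀ • e) P ≤
      ∑ k, p k * realEval (x k₀ • e) (dirDeriv (u k) P) :=
    Finset.sum_le_sum fun k _ ↦ mul_le_mul_of_nonneg_left (hge k) (hp k)
  rw [← Finset.sum_mul, hp1, one_mul] at h4
  rw [e1] at h3
  linarith

theorem RealStable.exists_choice {J K : Type*} [DecidableEq J] [Fintype K] [Nonempty K]
    {P : MvPolynomial σ ℂ} (h : RealStable P) {p : K → ℝ} (hp : 0 ≤ p) (hp1 : ∑ k, p k = 1)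
    {u : J → K → σ → ℝ} (hu : 0 ≤ u) {e : σ → ℝ} (he : 0 ≤ e)
    (hlarge : ∀ l : List (σ → ℝ), (∀ w ∈ l, 0 ≤ w) →
      ∃ x₀ : ℝ, ∀ x : ℝ, x₀ < x → 0 < realEval (x • e) (shiftList l P))
    {b : ℝ} {js : List J} (hjs : js.Nodup)
    (hT : ∀ x : ℝ, b < x →
      0 < realEval (x • e) (shiftList (js.map fun j a ↦ ∑ k, p k * u j k a) P)) :
    ∃ f : J → K, ∀ x : ℝ, b < x →
      0 < realEval (x • e) (shiftList (js.map fun j ↦ u j (f j)) P) := by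
  induction js generalizing P with
  | nil => exact ⟨fun _ ↦ Classical.arbitrary K, hT⟩
  | cons j js ih =>
    rw [List.nodup_cons] at hjs
    have hw : ∀ w ∈ js.map fun j a ↦ ∑ k, p k * u j k a, 0 ≤ w := by
      intro w hw
      obtain ⟨j, -, rfl⟩ := List.mem_map.1 hw
      exact fun a ↦ Finset.sum_nonneg fun k _ ↦ mul_nonneg (hp k) (hu j k a)
    obtain ⟨x₀, hx₀⟩ := hlarge _ hw
    obtain ⟨k, hk⟩ := (h.shiftList hw).exists_shiftOp_pos hp hp1 (hu j) he hx₀ hT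
    obtain ⟨f, hf⟩ := ih (h.shiftOp (hu j k)) (fun l hl ↦ by
      rw [shiftList_shiftOp]
      exact hlarge (u j k :: l) (List.forall_mem_cons.2 ⟨hu j k, hl⟩)) hjs.2 (by
      rwa [shiftList_shiftOp])
    refine ⟨Function.update f j k, fun x hx ↦ ?_⟩
    have e1 : (js.map fun i ↦ u i (Function.update f j k i)) = js.map fun i ↦ u i (f i) := by
      refine List.map_congr_left fun i hi ↦ ?_
      rw [Function.update_of_ne]
      rintro rfl
      exact hjs.1 hi
    rw [List.map_cons, Function.update_self, e1, shiftList_cons, ← shiftList_shiftOp]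
    exact hf x hx

end

section

open Filter Topology
open Matrix

theorem exists_det_add_smul_vecMulVec {n R : Type*} [Fintype n] [DecidableEq n] [CommRing R]
    (A : Matrix n n R) (u v : n → R) :
    ∃ a b : R, ∀ t, (A + t • vecMulVec u v).det = a * t + b := by
  set N := fromBlocks A (replicateCol Unit u) 0 (1 : Matrix Unit Unit R)
  refine ⟨(N.updateRow (Sum.inr ()) (Sum.elim (-v) 0)).det,
    (N.updateRow (Sum.inr ()) (Sum.elim (0 : n → R) (1 : Unit → R))).det, fun t ↦ ?_⟩
  have e1 : A + t • vecMulVec u v = A - replicateCol Unit u * (-t • replicateRow Unit v) := by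
    rw [vecMulVec_eq Unit, Matrix.mul_smul, neg_smul, sub_neg_eq_add]
  have e2 : fromBlocks A (replicateCol Unit u) (-t • replicateRow Unit v) 1 =
      N.updateRow (Sum.inr ()) (t • Sum.elim (-v) 0 + Sum.elim (0 : n → R) (1 : Unit → R)) := by
    ext (i | i) (j | j) <;> simp [N, updateRow_apply, one_apply]
  rw [e1, ← det_fromBlocks_one₂₂, e2, det_updateRow_add, det_updateRow_smul, mul_comm]

/-- The squared Euclidean norm. -/
noncomputable def sqNorm {n : Type*} [Fintype n] (u : n → ℂ) : ℝ := ∑ i, Complex.normSq (u i)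

section

variable {n : Type*} [Fintype n]

theorem sqNorm_nonneg (u : n → ℂ) : 0 ≤ sqNorm u :=
  Finset.sum_nonneg fun _ _ ↦ Complex.normSq_nonneg _

theorem sqNorm_pos {u : n → ℂ} (hu : u ≠ 0) : 0 < sqNorm u := by
  obtain ⟨i, hi⟩ := Function.ne_iff.1 hu
  exact Finset.sum_pos' (fun _ _ ↦ Complex.normSq_nonneg _)
    ⟨i, Finset.mem_univ i, Complex.normSq_pos.2 hi⟩

theorem star_dotProduct_self (u : n → ℂ) : star u ⬝ᵥ u = sqNorm u := by
  simp [sqNorm, dotProduct, Complex.normSq_eq_conj_mul_self]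

theorem normSq_dotProduct_le (u v : n → ℂ) :
    Complex.normSq (u ⬝ᵥ v) ≤ sqNorm u * sqNorm v := by
  have h1 : ‖u ⬝ᵥ v‖ ≤ ∑ i, ‖u i‖ * ‖v i‖ := by
    refine (norm_sum_le _ _).trans_eq (Finset.sum_congr rfl fun i _ ↦ norm_mul _ _)
  have h2 := Finset.sum_mul_sq_le_sq_mul_sq Finset.univ (fun i ↦ ‖u i‖) fun i ↦ ‖v i‖
  simp only [sqNorm, Complex.normSq_eq_norm_sq]
  exact (pow_le_pow_left₀ (norm_nonneg _) h1 2).trans h2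

theorem sqNorm_star (u : n → ℂ) : sqNorm (star u) = sqNorm u := by
  simp [sqNorm]

variable {Ω : Type*} [Fintype Ω]

/-- The sum of the rank one matrices `v a * (v a)ᴴ` with complex weights `z a`. -/
noncomputable def rankOneSum (v : Ω → n → ℂ) (z : Ω → ℂ) : Matrix n n ℂ :=
  ∑ a, z a • vecMulVec (v a) (star (v a))

omit [Fintype n] in
theorem rankOneSum_add_single [DecidableEq Ω] (v : Ω → n → ℂ) (z : Ω → ℂ) (a : Ω) (t : ℂ) :
    rankOneSum v (fun i ↦ z i + t * (Pi.single a 1 : Ω → ℝ) i) =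
      rankOneSum v z + t • vecMulVec (v a) (star (v a)) := by
  have : t • vecMulVec (v a) (star (v a)) = ∑ i, (t * (Pi.single a 1 : Ω → ℝ) i) •
      vecMulVec (v i) (star (v i)) := by
    rw [Finset.sum_eq_single_of_mem a (Finset.mem_univ a)]
    · simp
    · intro b _ hb
      simp [hb]
  rw [rankOneSum, rankOneSum, this, ← Finset.sum_add_distrib]
  simp only [add_smul]

theorem star_dotProduct_rankOneSum (v : Ω → n → ℂ) (z : Ω → ℂ) (u : n → ℂ) :
    star u ⬝ᵥ (rankOneSum v z *ᵥ u) = ∑ a, z a * Complex.normSq (star (v a) ⬝ᵥ u) := by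
  rw [rankOneSum, sum_mulVec, dotProduct_sum]
  refine Finset.sum_congr rfl fun a _ ↦ ?_
  rw [smul_mulVec, vecMulVec_mulVec, dotProduct_smul, dotProduct_smul, smul_eq_mul,
    MulOpposite.smul_eq_mul_unop, MulOpposite.unop_op, Complex.normSq_eq_conj_mul_self]
  congr 2
  rw [← Complex.star_def, star_dotProduct]

omit [Fintype n] in
theorem isHermitian_rankOneSum (v : Ω → n → ℂ) (z : Ω → ℝ) :
    (rankOneSum v fun a ↦ z a).IsHermitian := by
  ext i j
  simp [rankOneSum, Matrix.sum_apply, vecMulVec_apply, mul_comm]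

variable [DecidableEq n]

/-- The determinant of a weighted sum of rank one matrices, as a polynomial in the weights. -/
noncomputable def mixedDet (v : Ω → n → ℂ) : MvPolynomial Ω ℂ :=
  (∑ a, (MvPolynomial.X a : MvPolynomial Ω ℂ) •
    (vecMulVec (v a) (star (v a))).map MvPolynomial.C).det

theorem eval_mixedDet (v : Ω → n → ℂ) (z : Ω → ℂ) :
    MvPolynomial.eval z (mixedDet v) = (rankOneSum v z).det := by
  rw [mixedDet, RingHom.map_det]
  congr 1
  ext i j
  simp [rankOneSum, Matrix.sum_apply]

theorem map_conj_mixedDet (v : Ω → n → ℂ) :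
    MvPolynomial.map (starRingEnd ℂ) (mixedDet v) = mixedDet v := by
  rw [mixedDet, RingHom.map_det, ← det_transpose]
  congr 1
  ext1 i j
  simp [Matrix.sum_apply, vecMulVec_apply, mul_comm]

theorem realStable_mixedDet {v : Ω → n → ℂ} (hv : ∀ u, (∀ a, star (v a) ⬝ᵥ u = 0) → u = 0) :
    RealStable (mixedDet v) where
  eval_ne_zero z hz h0 := by
    rw [eval_mixedDet] at h0
    obtain ⟨u, hu, hMu⟩ := exists_mulVec_eq_zero_iff.2 h0
    have h1 := star_dotProduct_rankOneSum v z u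
    rw [hMu, dotProduct_zero] at h1
    have h2 := congrArg Complex.im h1
    simp only [Complex.zero_im, Complex.im_sum, Complex.im_mul_ofReal] at h2
    refine hu (hv u fun a ↦ ?_)
    have h3 := (Finset.sum_eq_zero_iff_of_nonneg fun a _ ↦
      mul_nonneg (hz a).le (Complex.normSq_nonneg _)).1 h2.symm a (Finset.mem_univ a)
    exact Complex.normSq_eq_zero.1 ((mul_eq_zero.1 h3).resolve_left (hz a).ne')
  map_conj := map_conj_mixedDet v

theorem exists_eval_lineRestrict_mixedDet [DecidableEq Ω] (v : Ω → n → ℂ) (z : Ω → ℂ) (a : Ω) :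
    ∃ α β : ℂ, lineRestrict z (Pi.single a 1) (mixedDet v) =
      Polynomial.C α * Polynomial.X + Polynomial.C β := by
  obtain ⟨α, β, h⟩ := exists_det_add_smul_vecMulVec (rankOneSum v z) (v a) (star (v a))
  refine ⟨α, β, Polynomial.funext fun t ↦ ?_⟩
  rw [eval_lineRestrict, eval_mixedDet, rankOneSum_add_single, h]
  simp

theorem dirDeriv_dirDeriv_mixedDet [DecidableEq Ω] (v : Ω → n → ℂ) (a : Ω) :
    dirDeriv (Pi.single a 1) (dirDeriv (Pi.single a 1) (mixedDet v)) = 0 := by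
  refine MvPolynomial.funext fun z ↦ ?_
  obtain ⟨α, β, h⟩ := exists_eval_lineRestrict_mixedDet v z a
  have h1 := congrArg (fun f ↦ f.derivative.derivative.eval 0) h
  simp only [derivative_lineRestrict, eval_lineRestrict] at h1
  simpa using h1

end

section

variable {n Ω : Type*} [Fintype n] [Fintype Ω]

/-- The Hermitian matrix `rankOneSum v z` is at least `c`. -/
def HasGap (v : Ω → n → ℂ) (z : Ω → ℝ) (c : ℝ) : Prop :=
  ∀ u, c * sqNorm u ≤ ∑ a, z a * Complex.normSq (star (v a) ⬝ᵥ u)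

theorem HasGap.add {v : Ω → n → ℂ} {z : Ω → ℝ} {c : ℝ} (h : HasGap v z c) {y : Ω → ℝ}
    (hy : 0 ≤ y) : HasGap v (z + y) c := fun u ↦ (h u).trans <| by
  refine Finset.sum_le_sum fun a _ ↦ mul_le_mul_of_nonneg_right ?_ (Complex.normSq_nonneg _)
  simpa using hy a

theorem re_star_dotProduct_rankOneSum (v : Ω → n → ℂ) (z : Ω → ℝ) (u : n → ℂ) :
    star u ⬝ᵥ (rankOneSum v (fun a ↦ z a) *ᵥ u) =
      ((∑ a, z a * Complex.normSq (star (v a) ⬝ᵥ u) : ℝ) : ℂ) := by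
  rw [star_dotProduct_rankOneSum]
  push_cast
  rfl

variable [DecidableEq n]

omit [DecidableEq n] in
theorem HasGap.posDef {v : Ω → n → ℂ} {z : Ω → ℝ} {c : ℝ} (h : HasGap v z c) (hc : 0 < c) :
    (rankOneSum v fun a ↦ z a).PosDef := by
  refine .of_dotProduct_mulVec_pos (isHermitian_rankOneSum v z) fun u hu ↦ ?_
  rw [re_star_dotProduct_rankOneSum]
  exact_mod_cast (mul_pos hc (sqNorm_pos hu)).trans_le (h u)

theorem HasGap.isAbove {v : Ω → n → ℂ} {z : Ω → ℝ} {c : ℝ} (h : HasGap v z c) (hc : 0 < c) :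
    IsAbove z (mixedDet v) := by
  intro y hy
  rw [realEval, eval_mixedDet]
  exact (Complex.pos_iff.1 ((h.add hy).posDef hc).det_pos).1

theorem eval_dirDeriv_single_mixedDet [DecidableEq Ω] (v : Ω → n → ℂ) {z : Ω → ℂ} (a : Ω)
    (hz : IsUnit (rankOneSum v z).det) :
    MvPolynomial.eval z (dirDeriv (Pi.single a 1) (mixedDet v)) =
      (rankOneSum v z).det * (star (v a) ⬝ᵥ ((rankOneSum v z)⁻¹ *ᵥ v a)) := by
  obtain ⟨α, β, h⟩ := exists_eval_lineRestrict_mixedDet v z a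
  have h1 := congrArg (fun f ↦ f.derivative.eval 0) h
  simp only [derivative_lineRestrict, eval_lineRestrict] at h1
  have h2 : ∀ t : ℂ, (rankOneSum v z + t • vecMulVec (v a) (star (v a))).det = α * t + β := by
    intro t
    rw [← rankOneSum_add_single, ← eval_mixedDet, ← eval_lineRestrict, h]
    simp
  have h3 := h2 0
  have h4 := h2 1
  rw [one_smul, vecMulVec_eq Unit, det_add_replicateCol_mul_replicateRow hz] at h4
  simp only [zero_smul, add_zero, mul_zero, zero_add] at h3
  have h5 : MvPolynomial.eval z (dirDeriv (Pi.single a 1) (mixedDet v)) = α := by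
    simpa using h1
  have h6 : (1 + replicateRow Unit (star (v a)) * (rankOneSum v z)⁻¹ *
      replicateCol Unit (v a)).det = 1 + star (v a) ⬝ᵥ ((rankOneSum v z)⁻¹ *ᵥ v a) := by
    rw [det_unique, Matrix.mul_assoc, ← replicateCol_mulVec]
    simp [mul_apply, dotProduct]
  rw [h6, h3] at h4
  rw [h5, h3]
  linear_combination -h4

theorem HasGap.re_dotProduct_inv_le {v : Ω → n → ℂ} {z : Ω → ℝ} {c : ℝ} (h : HasGap v z c)
    (hc : 0 < c) (x : n → ℂ) :
    (star x ⬝ᵥ ((rankOneSum v fun a ↦ z a)⁻¹ *ᵥ x)).re ≤ sqNorm x / c := by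
  have hdet : IsUnit (rankOneSum v fun a ↦ z a).det :=
    (isUnit_iff_ne_zero.2 (h.posDef hc).det_pos.ne')
  set M := rankOneSum v fun a ↦ z a with hM
  set y := M⁻¹ *ᵥ x with hy
  have hx : x = M *ᵥ y := by
    rw [hy, mulVec_mulVec, mul_nonsing_inv _ hdet, one_mulVec]
  have h1 : star y ⬝ᵥ x = ((∑ a, z a * Complex.normSq (star (v a) ⬝ᵥ y) : ℝ) : ℂ) := by
    rw [← re_star_dotProduct_rankOneSum, ← hM, ← hx]
  have h2 := h y
  set s := ∑ a, z a * Complex.normSq (star (v a) ⬝ᵥ y)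
  have h3 : star x ⬝ᵥ y = s := by
    rw [star_dotProduct, h1]
    simp
  have h4 := normSq_dotProduct_le (star x) y
  rw [h3, sqNorm_star, Complex.normSq_ofReal] at h4
  rw [h3, Complex.ofReal_re, le_div_iff₀ hc]
  have hy0 := sqNorm_nonneg y
  have hx0 := sqNorm_nonneg x
  rcases (mul_nonneg hc.le hy0).trans h2 |>.eq_or_lt with hs | hs
  · rw [← hs]
    simpa using hx0
  · by_contra! hcon
    nlinarith [mul_le_mul_of_nonneg_left h2 hx0, mul_pos hs (sub_pos.2 hcon)]

theorem HasGap.dirDeriv_ratio_le {v : Ω → n → ℂ} {z : Ω → ℝ} {c : ℝ} (h : HasGap v z c)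
    (hc : 0 < c) {w : Ω → ℝ} (hw : 0 ≤ w) :
    realEval z (dirDeriv w (mixedDet v)) / realEval z (mixedDet v) ≤
      (∑ a, w a * sqNorm (v a)) / c := by
  classical
  have hpos := (h.isAbove hc).pos
  have hdet : IsUnit (rankOneSum v fun a ↦ z a).det :=
    (isUnit_iff_ne_zero.2 (h.posDef hc).det_pos.ne')
  have e1 : w = fun a ↦ ∑ i, w i * (Pi.single i 1 : Ω → ℝ) a := by
    ext a
    simp [Pi.single_apply]
  have e2 : realEval z (dirDeriv w (mixedDet v)) = ∑ a, w a *
      realEval z (dirDeriv (Pi.single a 1) (mixedDet v)) := by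
    rw [e1, dirDeriv_sum]
    simp only [realEval, map_sum, MvPolynomial.smul_eval, Complex.re_sum, Complex.re_ofReal_mul]
    simp [Pi.single_apply]
  have hr : realEval z (mixedDet v) = (rankOneSum v fun a ↦ z a).det := by
    rw [← eval_mixedDet]
    exact ofReal_realEval (map_conj_mixedDet v) z
  rw [e2, div_le_iff₀ hpos, Finset.sum_div, Finset.sum_mul]
  refine Finset.sum_le_sum fun a _ ↦ ?_
  rw [mul_div_assoc, mul_assoc]
  refine mul_le_mul_of_nonneg_left ?_ (hw a)
  rw [realEval, eval_dirDeriv_single_mixedDet v a hdet, ← hr, Complex.re_ofReal_mul, mul_comm]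
  exact mul_le_mul_of_nonneg_right (h.re_dotProduct_inv_le hc _) hpos.le

end

theorem eval_shiftOp_of_affine {σ : Type*} {w : σ → ℝ} {P : MvPolynomial σ ℂ}
    (h : dirDeriv w (dirDeriv w P) = 0) (z : σ → ℝ) :
    realEval z (shiftOp w P) = realEval (z - w) P := by
  set f := lineRestrict (fun i ↦ (z i : ℂ)) w P with hf
  have h2 : f.derivative.derivative = 0 := by
    rw [hf, derivative_lineRestrict, derivative_lineRestrict, h, map_zero]
  have h1 := Polynomial.eq_C_of_natDegree_eq_zero
    (Polynomial.derivative_eq_zero.1 h2)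
  set c := f.derivative.coeff 0
  have h3 : (f - Polynomial.C c * Polynomial.X).derivative = 0 := by
    simp [h1]
  have h4 := Polynomial.eq_C_of_natDegree_eq_zero
    (Polynomial.derivative_eq_zero.1 h3)
  set b := (f - Polynomial.C c * Polynomial.X).coeff 0
  have h5 : f = Polynomial.C c * Polynomial.X + Polynomial.C b := by
    rw [← h4]
    ring
  have e0 : MvPolynomial.eval (fun i ↦ (z i : ℂ)) P = b := by
    have := congrArg (Polynomial.eval 0) h5
    rw [hf, eval_lineRestrict] at this
    simpa using this
  have e1 : MvPolynomial.eval (fun i ↦ (z i : ℂ)) (dirDeriv w P) = c := by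
    have := congrArg (Polynomial.eval 0) h1
    rw [hf, derivative_lineRestrict, eval_lineRestrict] at this
    simpa using this
  have e2 : MvPolynomial.eval (fun i ↦ ((z - w) i : ℂ)) P = b - c := by
    have := congrArg (Polynomial.eval (-1)) h5
    rw [hf, eval_lineRestrict] at this
    simp only [neg_one_mul, ← sub_eq_add_neg, Polynomial.eval_add, Polynomial.eval_mul,
      Polynomial.eval_C, Polynomial.eval_X, mul_neg_one, neg_add_eq_sub] at this
    rw [← this]
    simp
  rw [realEval_shiftOp, realEval, realEval, realEval, e0, e1, e2, Complex.sub_re]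

theorem dirDeriv_shiftList {σ : Type*} (u : σ → ℝ) (l : List (σ → ℝ)) (P : MvPolynomial σ ℂ) :
    dirDeriv u (shiftList l P) = shiftList l (dirDeriv u P) := by
  induction l with
  | nil => rfl
  | cons w l ih => rw [shiftList_cons, shiftList_cons, dirDeriv_shiftOp, ih]

theorem shiftList_zero {σ : Type*} (l : List (σ → ℝ)) :
    shiftList l (0 : MvPolynomial σ ℂ) = 0 := by
  induction l with
  | nil => rfl
  | cons w l ih => rw [shiftList_cons, ih, shiftOp, map_zero, sub_zero]

theorem eval_shiftList_of_affine {σ : Type*} {l : List (σ → ℝ)} {P : MvPolynomial σ ℂ}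
    (h : ∀ w ∈ l, dirDeriv w (dirDeriv w P) = 0) (z : σ → ℝ) :
    realEval z (shiftList l P) = realEval (z - l.sum) P := by
  induction l generalizing z with
  | nil => simp [shiftList]
  | cons w l ih =>
    rw [List.forall_mem_cons] at h
    rw [shiftList_cons, eval_shiftOp_of_affine, ih h.2, List.sum_cons, sub_sub]
    rw [dirDeriv_shiftList, dirDeriv_shiftList, h.1, shiftList_zero]

section

variable {n Λ : Type*} [Fintype n] [Fintype Λ] [DecidableEq n]

/-- A family of vectors preceded by the standard basis. -/
def withBasis (v : Λ → n → ℂ) : n ⊕ Λ → n → ℂ :=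
  Sum.elim (fun i ↦ Pi.single i 1) v

/-- The indicator of the standard basis in `withBasis`. -/
def basisDir (n Λ : Type*) : n ⊕ Λ → ℝ := Sum.elim 1 0

omit [Fintype n] [Fintype Λ] [DecidableEq n] in
theorem basisDir_nonneg : 0 ≤ basisDir n Λ := by
  rintro (a | a) <;> simp [basisDir]

omit [Fintype Λ] in
theorem star_withBasis_inl (v : Λ → n → ℂ) (i : n) (u : n → ℂ) :
    star (withBasis v (Sum.inl i)) ⬝ᵥ u = u i := by
  simp [withBasis, dotProduct, Pi.single_apply]

theorem realStable_withBasis (v : Λ → n → ℂ) : RealStable (mixedDet (withBasis v)) :=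
  realStable_mixedDet fun u hu ↦ funext fun i ↦ by
    rw [← star_withBasis_inl v i u, hu, Pi.zero_apply]

theorem form_withBasis (v : Λ → n → ℂ) (x : ℝ) (y : n ⊕ Λ → ℝ) (u : n → ℂ) :
    ∑ a, (x • basisDir n Λ - y) a * Complex.normSq (star (withBasis v a) ⬝ᵥ u) =
      x * sqNorm u - ∑ a, y a * Complex.normSq (star (withBasis v a) ⬝ᵥ u) := by
  simp only [Pi.sub_apply, sub_mul, Finset.sum_sub_distrib]
  congr 1
  simp [Fintype.sum_sum_type, star_withBasis_inl, basisDir, sqNorm, Finset.mul_sum]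

theorem hasGap_withBasis (v : Λ → n → ℂ) (x : ℝ) {y : n ⊕ Λ → ℝ} (hy : 0 ≤ y) :
    HasGap (withBasis v) (x • basisDir n Λ - y) (x - ∑ a, y a * sqNorm (withBasis v a)) := by
  intro u
  rw [form_withBasis, sub_mul, Finset.sum_mul]
  refine sub_le_sub_left (Finset.sum_le_sum fun a _ ↦ ?_) _
  rw [mul_assoc]
  refine mul_le_mul_of_nonneg_left ?_ (hy a)
  simpa [sqNorm_star] using normSq_dotProduct_le (star (withBasis v a)) u

theorem exists_large_withBasis (v : Λ → n → ℂ) (l : List (n ⊕ Λ → ℝ)) (hl : ∀ w ∈ l, 0 ≤ w) :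
    ∃ x₀ : ℝ, ∀ x : ℝ, x₀ < x →
      0 < realEval (x • basisDir n Λ) (shiftList l (mixedDet (withBasis v))) := by
  set B := ∑ a, l.sum a * sqNorm (withBasis v a) with hB
  have hs : 0 ≤ l.sum := List.sum_nonneg hl
  have hB0 : 0 ≤ B := Finset.sum_nonneg fun a _ ↦ mul_nonneg (hs a) (sqNorm_nonneg _)
  refine ⟨4 * B, fun x hx ↦ ?_⟩
  have hgap := hasGap_withBasis v x (y := (2 : ℝ) • l.sum) (smul_nonneg zero_le_two hs)
  have e1 : ∑ a, ((2 : ℝ) • l.sum) a * sqNorm (withBasis v a) = 2 * B := by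
    simp only [hB, Finset.mul_sum, Pi.smul_apply, smul_eq_mul, mul_assoc]
  rw [e1] at hgap
  have hc : 0 < x - 2 * B := by linarith
  have := (realStable_withBasis v).isAbove_shiftList hl (hgap.isAbove hc) two_pos fun w hw ↦ by
    refine (hgap.dirDeriv_ratio_le hc (hl w hw)).trans ?_
    rw [div_le_iff₀ hc]
    have h1 : ∑ a, w a * sqNorm (withBasis v a) ≤ B := Finset.sum_le_sum fun a _ ↦
      mul_le_mul_of_nonneg_right (List.single_le_sum hl w hw a) (sqNorm_nonneg _)
    linarith
  rw [sub_add_cancel] at this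
  exact this.pos

theorem sum_le_of_shift_pos (v : Λ → n → ℂ) {y : n ⊕ Λ → ℝ} {b : ℝ}
    (h : ∀ x : ℝ, b < x → 0 < realEval (x • basisDir n Λ - y) (mixedDet (withBasis v)))
    (u : n → ℂ) :
    ∑ a, y a * Complex.normSq (star (withBasis v a) ⬝ᵥ u) ≤ b * sqNorm u := by
  set B := rankOneSum (withBasis v) fun a ↦ ((b • basisDir n Λ - y) a : ℂ) with hB
  have hherm : B.IsHermitian := isHermitian_rankOneSum _ _
  have hpsd : B.PosSemidef := by
    rw [hherm.posSemidef_iff_eigenvalues_nonneg]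
    intro i
    by_contra! hneg
    rw [Pi.zero_apply] at hneg
    set ν := hherm.eigenvalues i
    have h1 := h (b - ν) (by linarith)
    have e1 : (rankOneSum (withBasis v) fun a ↦ (((b - ν) • basisDir n Λ - y) a : ℂ)) =
        B - (ν : ℂ) • 1 := by
      have e0 : rankOneSum (withBasis v) (fun a ↦ (basisDir n Λ a : ℂ)) = 1 := by
        ext i j
        simp [rankOneSum, Matrix.sum_apply, basisDir, withBasis, vecMulVec_apply,
          Pi.single_apply, Matrix.one_apply]
      rw [hB, ← e0, rankOneSum, rankOneSum, rankOneSum, Finset.smul_sum,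
        ← Finset.sum_sub_distrib]
      refine Finset.sum_congr rfl fun a _ ↦ ?_
      rw [smul_smul, ← sub_smul]
      congr 1
      simp only [Pi.sub_apply, Pi.smul_apply, smul_eq_mul]
      push_cast
      ring
    have h2 : (B - (ν : ℂ) • 1).det = 0 := by
      refine exists_mulVec_eq_zero_iff.1 ⟨(hherm.eigenvectorBasis i).ofLp, ?_, ?_⟩
      · have := hherm.eigenvectorBasis.toBasis.ne_zero i
        simpa using this
      · rw [sub_mulVec, hherm.mulVec_eigenvectorBasis, smul_mulVec, one_mulVec]
        simp [ν]
    rw [realEval, eval_mixedDet, e1, h2] at h1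
    simp at h1
  have h3 := hpsd.dotProduct_mulVec_nonneg u
  rw [hB, re_star_dotProduct_rankOneSum, form_withBasis] at h3
  have h4 := Complex.zero_le_real.1 h3
  linarith

end

end

section

open Matrix

theorem exists_choice_sum_normSq_le {n J K : Type*} [Fintype n] [DecidableEq n] [Fintype J]
    [DecidableEq J] [Fintype K] [DecidableEq K] [Nonempty K] (v : J → K → n → ℂ) {p : K → ℝ}
    (hp : 0 ≤ p) (hp1 : ∑ k, p k = 1) {δ ε d : ℝ} (hε : 0 ≤ ε) (hd : 1 < d)
    (hδ : ∀ u : n → ℂ, ∑ j, ∑ k, p k * Complex.normSq (star (v j k) ⬝ᵥ u) ≤ δ * sqNorm u)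
    (hv : ∀ j, ∑ k, p k * sqNorm (v j k) ≤ ε) :
    ∃ f : J → K, ∀ u : n → ℂ, ∑ j, Complex.normSq (star (v j (f j)) ⬝ᵥ u) ≤
      (d * δ + ε * d / (d - 1)) * sqNorm u := by
  have hd0 : 0 < d := one_pos.trans hd
  set V : n ⊕ (J × K) → n → ℂ := withBasis fun jk : J × K ↦ v jk.1 jk.2 with hV
  set e := basisDir n (J × K) with he
  have he0 : 0 ≤ e := basisDir_nonneg
  set u : J → K → n ⊕ (J × K) → ℝ := fun j k ↦ Pi.single (Sum.inr (j, k)) 1 with hu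
  have hu0 : 0 ≤ u := fun j k ↦ by
    have : (0 : n ⊕ (J × K) → ℝ) ≤ Pi.single (Sum.inr (j, k)) 1 :=
      Pi.single_nonneg.2 zero_le_one
    exact this
  set W : J → n ⊕ (J × K) → ℝ := fun j a ↦ ∑ k, p k * u j k a with hW
  have hW0 : ∀ j, 0 ≤ W j := fun j a ↦
    Finset.sum_nonneg fun k _ ↦ mul_nonneg (hp k) (hu0 j k a)
  have hWl : ∀ j i, W j (Sum.inl i) = 0 := fun j i ↦ by simp [hW, hu]
  have hWr : ∀ j j' k, W j (Sum.inr (j', k)) = if j' = j then p k else 0 := fun j j' k ↦ by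
    simp only [hW, hu, Pi.single_apply, Sum.inr.injEq, Prod.mk.injEq]
    split_ifs with h <;> simp [h]
  set l := (Finset.univ : Finset J).toList.map W with hl
  have hsum : l.sum = ∑ j, W j := Finset.sum_map_toList _ _
  have hlpos : ∀ w ∈ l, 0 ≤ w := by
    intro w hw
    obtain ⟨j, -, rfl⟩ := List.mem_map.1 hw
    exact hW0 j
  obtain ⟨f, hf⟩ := (realStable_withBasis fun jk : J × K ↦ v jk.1 jk.2).exists_choice hp hp1 hu0
    he0 (exists_large_withBasis _) (b := d * δ + ε * d / (d - 1))
    (Finset.nodup_toList (Finset.univ : Finset J)) (fun x hx ↦ by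
      have hgap : HasGap V (x • e - d • l.sum) (x - d * δ) := by
        intro w
        rw [hV, he, form_withBasis, sub_mul]
        have := mul_le_mul_of_nonneg_left (hδ w) hd0.le
        refine sub_le_sub_left (le_trans (le_of_eq ?_) (this.trans_eq (mul_assoc _ _ _).symm)) _
        simp only [hsum, Pi.smul_apply, Finset.sum_apply, smul_eq_mul, mul_assoc,
          ← Finset.mul_sum, Fintype.sum_sum_type, hWl, hWr, Fintype.sum_prod_type]
        simp [withBasis]
      have hc : ε * d / (d - 1) < x - d * δ := by linarith
      have hc0 : 0 < x - d * δ :=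
        (div_nonneg (mul_nonneg hε hd0.le) (sub_nonneg.2 hd.le)).trans_lt hc
      have := (realStable_withBasis fun jk : J × K ↦ v jk.1 jk.2).isAbove_shiftList hlpos
        (hgap.isAbove hc0) hd0 fun w hw ↦ by
          refine (hgap.dirDeriv_ratio_le hc0 (hlpos w hw)).trans ?_
          obtain ⟨j, -, rfl⟩ := List.mem_map.1 hw
          have h1 : ∑ a, W j a * sqNorm (V a) ≤ ε := by
            refine le_trans (le_of_eq ?_) (hv j)
            simp only [Fintype.sum_sum_type, hWl, hWr, Fintype.sum_prod_type]
            simp [hV, withBasis]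
          rw [div_le_iff₀ hc0]
          rw [div_lt_iff₀ (sub_pos.2 hd)] at hc
          refine h1.trans ?_
          rw [one_sub_div hd0.ne', div_mul_eq_mul_div, le_div_iff₀ hd0]
          linarith
      rw [sub_add_cancel] at this
      exact this.pos)
  refine ⟨f, fun w ↦ ?_⟩
  have hsum' : ((Finset.univ : Finset J).toList.map fun j ↦ u j (f j)).sum = ∑ j, u j (f j) :=
    Finset.sum_map_toList _ _
  have h := sum_le_of_shift_pos (fun jk : J × K ↦ v jk.1 jk.2) (y := ∑ j, u j (f j))
    (b := d * δ + ε * d / (d - 1)) (fun x hx ↦ by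
      rw [← hsum', ← eval_shiftList_of_affine]
      · exact hf x hx
      · intro w hw
        obtain ⟨j, -, rfl⟩ := List.mem_map.1 hw
        exact dirDeriv_dirDeriv_mixedDet _ _) w
  refine le_trans (le_of_eq ?_) h
  simp only [Finset.sum_apply, Finset.sum_mul]
  rw [Finset.sum_comm]
  simp [hu, Pi.single_apply, withBasis]

theorem sqNorm_conjTranspose_mulVec_le {m n : Type*} [Fintype m] [Fintype n]
    {M : Matrix m n ℂ} {c : ℝ} (hc : 0 ≤ c) (h : ∀ u, sqNorm (M *ᵥ u) ≤ c * sqNorm u)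
    (w : m → ℂ) : sqNorm (Mᴴ *ᵥ w) ≤ c * sqNorm w := by
  set x := Mᴴ *ᵥ w with hx
  have h1 : star w ⬝ᵥ (M *ᵥ x) = sqNorm x := by
    rw [← star_dotProduct_self, dotProduct_mulVec, hx, star_mulVec, conjTranspose_conjTranspose]
  have h2 := normSq_dotProduct_le (star w) (M *ᵥ x)
  rw [h1, sqNorm_star, Complex.normSq_ofReal] at h2
  have h3 := mul_le_mul_of_nonneg_left (h x) (sqNorm_nonneg w)
  rcases (sqNorm_nonneg x).eq_or_lt with h0 | h0
  · rw [← h0]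
    exact mul_nonneg hc (sqNorm_nonneg w)
  · refine le_of_mul_le_mul_right ?_ h0
    linarith

section

variable {ι : Type*} [Fintype ι]

/-- The principal submatrix of `A` on `S` is at most `b` in the Loewner order. -/
def FormLE (A : Matrix ι ι ℂ) (S : Finset ι) (b : ℝ) : Prop :=
  ∀ u : ι → ℂ, (∀ i ∉ S, u i = 0) → (star u ⬝ᵥ (A *ᵥ u)).re ≤ b * sqNorm u

theorem FormLE.mono {A : Matrix ι ι ℂ} {S T : Finset ι} {b c : ℝ} (h : FormLE A S b)
    (hTS : T ⊆ S) (hbc : b ≤ c) : FormLE A T c := fun u hu ↦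
  (h u fun i hi ↦ hu i fun hT ↦ hi (hTS hT)).trans
    (mul_le_mul_of_nonneg_right hbc (sqNorm_nonneg u))

theorem star_dotProduct_conjTranspose_mul_self {m : Type*} [Fintype m] (B : Matrix m ι ℂ)
    (u : ι → ℂ) : star u ⬝ᵥ ((Bᴴ * B) *ᵥ u) = sqNorm (B *ᵥ u) := by
  rw [← star_dotProduct_self, ← mulVec_mulVec, dotProduct_mulVec, star_mulVec]

open scoped MatrixOrder in
theorem Matrix.PosSemidef.exists_eq_conjTranspose_mul_self [DecidableEq ι]
    {A : Matrix ι ι ℂ} (hA : A.PosSemidef) : ∃ B : Matrix ι ι ℂ, A = Bᴴ * B :=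
  CStarAlgebra.nonneg_iff_eq_star_mul_self.1 hA.nonneg

theorem formLE_of_one_sub [DecidableEq ι] {A : Matrix ι ι ℂ} (hA : (1 - A).PosSemidef)
    (S : Finset ι) : FormLE A S 1 := fun u _ ↦ by
  have h := (Complex.nonneg_iff.1 (hA.dotProduct_mulVec_nonneg u)).1
  rw [sub_mulVec, one_mulVec, dotProduct_sub, star_dotProduct_self, Complex.sub_re,
    Complex.ofReal_re] at h
  linarith

theorem exists_paving [DecidableEq ι] {A : Matrix ι ι ℂ} (hA : A.PosSemidef)
    (hAc : (1 - A).PosSemidef) {α : ℝ} (hα : 0 ≤ α) (hdiag : ∀ i, (A i i).re ≤ α)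
    {k : ℕ} (hk : 0 < k) :
    ∃ c : ι → Fin k, ∀ t, FormLE A {i | c i = t} (α + 1 / k + (1 + α) / √k) := by
  obtain ⟨B, rfl⟩ := hA.exists_eq_conjTranspose_mul_self
  have hB : ∀ u, sqNorm (B *ᵥ u) ≤ 1 * sqNorm u := fun u ↦ by
    simpa [star_dotProduct_conjTranspose_mul_self] using
      formLE_of_one_sub hAc Finset.univ u (by simp)
  have hB' := sqNorm_conjTranspose_mulVec_le zero_le_one hB
  have hk0 : (0 : ℝ) < k := Nat.cast_pos.2 hk
  have : Nonempty (Fin k) := ⟨⟨0, hk⟩⟩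
  set v : ι → Fin k → ι × Fin k → ℂ := fun i c a ↦ if a.2 = c then B a.1 i else 0 with hv
  have hdot : ∀ i c (u : ι × Fin k → ℂ), star (v i c) ⬝ᵥ u = (Bᴴ *ᵥ fun a ↦ u (a, c)) i := by
    intro i c u
    simp [hv, dotProduct, mulVec, Fintype.sum_prod_type, apply_ite]
  obtain ⟨f, hf⟩ := exists_choice_sum_normSq_le v (p := fun _ ↦ 1 / (k : ℝ))
    (fun _ ↦ by positivity) (by simp [hk0.ne']) (δ := 1 / k) (d := 1 + √k) hα
    (by linarith [Real.sqrt_pos.2 hk0]) (fun u ↦ by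
      simp only [hdot, ← Finset.mul_sum]
      refine mul_le_mul_of_nonneg_left ?_ (by positivity)
      rw [Finset.sum_comm]
      refine (Finset.sum_le_sum fun c _ ↦ hB' fun a ↦ u (a, c)).trans_eq ?_
      simp only [one_mul, sqNorm, Fintype.sum_prod_type]
      rw [Finset.sum_comm]) (fun i ↦ by
      have h1 : ∀ c, sqNorm (v i c) = ((Bᴴ * B) i i).re := fun c ↦ by
        simp [hv, sqNorm, Fintype.sum_prod_type, apply_ite, mul_apply, Complex.normSq_apply]
      simpa [h1, hk0.ne'] using hdiag i)
  refine ⟨f, fun t u hu ↦ ?_⟩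
  have hs : √(k : ℝ) ≠ 0 := (Real.sqrt_pos.2 hk0).ne'
  have hb : (1 + √k) * (1 / k) + α * (1 + √k) / (1 + √k - 1) =
      α + 1 / k + (1 + α) / √k := by
    have := Real.sq_sqrt hk0.le
    rw [add_sub_cancel_left]
    field_simp
    linear_combination this
  rw [hb] at hf
  set M : Matrix ι ι ℂ := of fun i a ↦ if f i = t then star (B a i) else 0 with hM
  have key := sqNorm_conjTranspose_mulVec_le (M := M) (c := α + 1 / k + (1 + α) / √k)
    (by positivity) (fun w ↦ by
    have h := hf fun a ↦ if a.2 = t then w a.1 else 0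
    have e1 : sqNorm (fun a : ι × Fin k ↦ if a.2 = t then w a.1 else 0) = sqNorm w := by
      simp [sqNorm, Fintype.sum_prod_type, apply_ite]
    rw [e1] at h
    refine le_trans (Finset.sum_le_sum fun i _ ↦ le_of_eq ?_) h
    rw [hdot]
    by_cases hi : f i = t <;> simp [hM, hi, mulVec, dotProduct]) u
  refine le_trans (le_of_eq ?_) key
  rw [star_dotProduct_conjTranspose_mul_self, Complex.ofReal_re]
  congr 1
  ext a
  refine Finset.sum_congr rfl fun i _ ↦ ?_
  by_cases hi : f i = t
  · simp [hM, hi]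
  · simp [hu i (by simpa using hi)]

end

section

variable {ι : Type*} [Fintype ι] [DecidableEq ι]

theorem sum_normSq_mulVec_le {A : Matrix ι ι ℂ} (hA : A.PosSemidef) (hAc : (1 - A).PosSemidef)
    {W : Finset ι} {u : ι → ℂ} (hu : ∀ i ∈ W, u i = 0) :
    ∑ i ∈ W, Complex.normSq ((A *ᵥ u) i) ≤ sqNorm u / 4 := by
  obtain ⟨B, rfl⟩ := hA.exists_eq_conjTranspose_mul_self
  have hB : ∀ u, sqNorm (B *ᵥ u) ≤ 1 * sqNorm u := fun u ↦ by
    simpa [star_dotProduct_conjTranspose_mul_self] using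
      formLE_of_one_sub hAc Finset.univ u (by simp)
  set x := (Bᴴ * B) *ᵥ u with hx
  have h1 : sqNorm x ≤ sqNorm (B *ᵥ u) := by
    rw [hx, ← mulVec_mulVec, ← one_mul (sqNorm (B *ᵥ u))]
    exact sqNorm_conjTranspose_mulVec_le zero_le_one hB _
  have h2 : (star u ⬝ᵥ x).re = sqNorm (B *ᵥ u) := by
    rw [hx, star_dotProduct_conjTranspose_mul_self, Complex.ofReal_re]
  have h3 : ∑ i, Complex.normSq (2 * x i - u i) =
      4 * sqNorm x - 4 * (star u ⬝ᵥ x).re + sqNorm u := by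
    simp only [sqNorm, dotProduct, Complex.re_sum, Finset.mul_sum, ← Finset.sum_sub_distrib,
      ← Finset.sum_add_distrib]
    refine Finset.sum_congr rfl fun i _ ↦ ?_
    simp [Complex.normSq_apply]
    ring
  have h4 : ∑ i ∈ W, Complex.normSq (2 * x i - u i) ≤ ∑ i, Complex.normSq (2 * x i - u i) :=
    Finset.sum_le_sum_of_subset_of_nonneg W.subset_univ fun i _ _ ↦ Complex.normSq_nonneg _
  have h5 : ∑ i ∈ W, Complex.normSq (2 * x i - u i) = 4 * ∑ i ∈ W, Complex.normSq (x i) := by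
    rw [Finset.mul_sum]
    refine Finset.sum_congr rfl fun i hi ↦ ?_
    rw [hu i hi, sub_zero, Complex.normSq_mul]
    norm_num
  linarith

theorem FormLE.union {A : Matrix ι ι ℂ} (hA : A.IsHermitian) {L R : Finset ι}
    {a c : ℝ} (hL : FormLE A L a) (hR : FormLE A R a) (hLR : Disjoint L R) (hc : 0 ≤ c)
    (h : ∀ u : ι → ℂ, (∀ i ∉ L, u i = 0) →
      ∑ i ∈ R, Complex.normSq ((A *ᵥ u) i) ≤ c * sqNorm u) :
    FormLE A (L ∪ R) (a + √c) := by
  intro u hu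
  set x : ι → ℂ := fun i ↦ if i ∈ L then u i else 0 with hx
  set y : ι → ℂ := fun i ↦ if i ∈ R then u i else 0 with hy
  have hxy : u = x + y := by
    ext i
    by_cases hi : i ∈ L
    · simp [hx, hy, hi, Finset.disjoint_left.1 hLR hi]
    · by_cases hi' : i ∈ R <;> simp [hx, hy, hi, hi']
      exact hu i (by simp [hi, hi'])
  have hn : sqNorm u = sqNorm x + sqNorm y := by
    rw [sqNorm, sqNorm, sqNorm, ← Finset.sum_add_distrib]
    refine Finset.sum_congr rfl fun i _ ↦ ?_
    by_cases hi : i ∈ L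
    · simp [hx, hy, hi, Finset.disjoint_left.1 hLR hi]
    · by_cases hi' : i ∈ R <;> simp [hx, hy, hi, hi']
      exact hu i (by simp [hi, hi'])
  have hx0 : ∀ i ∉ L, x i = 0 := fun i hi ↦ by simp [hx, hi]
  have hy0 : ∀ i ∉ R, y i = 0 := fun i hi ↦ by simp [hy, hi]
  have hcross : star x ⬝ᵥ (A *ᵥ y) = star (star y ⬝ᵥ (A *ᵥ x)) := by
    rw [star_dotProduct, star_mulVec, hA.eq, ← dotProduct_mulVec]
  have hQ : (star u ⬝ᵥ (A *ᵥ u)).re = (star x ⬝ᵥ (A *ᵥ x)).re + (star y ⬝ᵥ (A *ᵥ y)).re +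
      2 * (star y ⬝ᵥ (A *ᵥ x)).re := by
    rw [hxy, star_add, mulVec_add, add_dotProduct, dotProduct_add, dotProduct_add, hcross]
    simp
    ring
  have h1 : Complex.normSq (star y ⬝ᵥ (A *ᵥ x)) ≤ sqNorm y * (c * sqNorm x) := by
    have e1 : star y ⬝ᵥ (A *ᵥ x) = star y ⬝ᵥ fun i ↦ if i ∈ R then (A *ᵥ x) i else 0 := by
      refine Finset.sum_congr rfl fun i _ ↦ ?_
      by_cases hi : i ∈ R <;> simp [hi, hy]
    rw [e1]
    refine (normSq_dotProduct_le _ _).trans ?_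
    rw [sqNorm_star]
    refine mul_le_mul_of_nonneg_left (le_trans (le_of_eq ?_) (h x hx0)) (sqNorm_nonneg y)
    simp [sqNorm, apply_ite]
  have h2 : (star y ⬝ᵥ (A *ᵥ x)).re ≤ √c * ((sqNorm x + sqNorm y) / 2) := by
    have hX := sqNorm_nonneg x
    have hY := sqNorm_nonneg y
    rw [← Real.sqrt_sq (show 0 ≤ (sqNorm x + sqNorm y) / 2 by positivity), ← Real.sqrt_mul hc]
    refine Real.le_sqrt_of_sq_le ?_
    have h3 : (star y ⬝ᵥ (A *ᵥ x)).re ^ 2 ≤ Complex.normSq (star y ⬝ᵥ (A *ᵥ x)) := by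
      rw [Complex.normSq_apply]
      nlinarith [sq_nonneg (star y ⬝ᵥ (A *ᵥ x)).im]
    nlinarith [mul_nonneg hc (sq_nonneg (sqNorm x - sqNorm y))]
  rw [hQ, hn]
  linarith [hL x hx0, hR y hy0]

/-- Choosing `q` rows of a block with small entries, so that the block becomes small in norm. -/
theorem exists_subset_offDiagonal_le {A : Matrix ι ι ℂ} (hA : A.PosSemidef)
    (hAc : (1 - A).PosSemidef) {L W : Finset ι} (hLW : Disjoint L W) {τ : ℝ} (hτ : 0 ≤ τ)
    (hW : ∀ i ∈ W, ∑ l ∈ L, Complex.normSq (A i l) ≤ τ) {q g : ℕ} (hg : 0 < g)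
    (hqg : q * g ≤ W.card) :
    ∃ R ⊆ W, R.card = q ∧ ∀ u : ι → ℂ, (∀ i ∉ L, u i = 0) →
      ∑ i ∈ R, Complex.normSq ((A *ᵥ u) i) ≤ (1 / (2 * g) + 2 * τ) * sqNorm u := by
  have hg0 : (0 : ℝ) < g := Nat.cast_pos.2 hg
  have : Nonempty (Fin g) := ⟨⟨0, hg⟩⟩
  obtain ⟨idx⟩ : Nonempty (Fin q × Fin g ↪ W) :=
    Function.Embedding.nonempty_of_card_le (by simpa using hqg)
  set v : Fin q → Fin g → L → ℂ := fun j k l ↦ A l (idx (j, k)) with hv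
  have hdot : ∀ j k (u : ι → ℂ), (∀ i ∉ L, u i = 0) →
      star (v j k) ⬝ᵥ (fun l : L ↦ u l) = (A *ᵥ u) (idx (j, k)) := by
    intro j k u hu
    have e1 : (A *ᵥ u) (idx (j, k)) = ∑ l ∈ L, A (idx (j, k)) l * u l :=
      (Finset.sum_subset L.subset_univ fun l _ hl ↦ by rw [hu l hl, mul_zero]).symm
    rw [e1, ← Finset.sum_coe_sort L]
    exact Finset.sum_congr rfl fun l _ ↦ by simp [hv, hA.isHermitian.apply]
  have hsq : ∀ u : ι → ℂ, (∀ i ∉ L, u i = 0) → sqNorm (fun l : L ↦ u l) = sqNorm u := by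
    intro u hu
    rw [sqNorm, Finset.sum_coe_sort L fun l ↦ Complex.normSq (u l)]
    exact Finset.sum_subset L.subset_univ fun l _ hl ↦ by rw [hu l hl, map_zero]
  have hinj : Function.Injective fun jk ↦ (idx jk : ι) :=
    Subtype.val_injective.comp idx.injective
  obtain ⟨f, hf⟩ := exists_choice_sum_normSq_le v (p := fun _ ↦ 1 / (g : ℝ))
    (fun _ ↦ by positivity) (by simp [hg0.ne']) (δ := 1 / (4 * g)) (d := 2) hτ
    one_lt_two (fun u ↦ by
      set w : ι → ℂ := fun i ↦ if h : i ∈ L then u ⟨i, h⟩ else 0 with hw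
      have hw0 : ∀ i ∉ L, w i = 0 := fun i hi ↦ by simp [hw, hi]
      have e1 : u = fun l : L ↦ w l := by
        ext l
        simp [hw]
      rw [e1, hsq w hw0]
      simp only [hdot _ _ _ hw0, ← Finset.mul_sum]
      rw [← Fintype.sum_prod_type' fun j k ↦ Complex.normSq ((A *ᵥ w) (idx (j, k)))]
      have h1 := sum_normSq_mulVec_le hA hAc (W := W) (u := w)
        fun i hi ↦ hw0 i (Finset.disjoint_right.1 hLW hi)
      have h2 : ∑ jk, Complex.normSq ((A *ᵥ w) (idx jk)) ≤
          ∑ i ∈ W, Complex.normSq ((A *ᵥ w) i) := by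
        refine (Finset.sum_map Finset.univ ⟨_, hinj⟩
          fun i ↦ Complex.normSq ((A *ᵥ w) i)).symm.trans_le ?_
        refine Finset.sum_le_sum_of_subset_of_nonneg ?_ fun i _ _ ↦ Complex.normSq_nonneg _
        intro i hi
        obtain ⟨jk, -, rfl⟩ := Finset.mem_map.1 hi
        exact (idx jk).2
      calc 1 / (g : ℝ) * ∑ jk, Complex.normSq ((A *ᵥ w) (idx jk))
          ≤ 1 / g * (sqNorm w / 4) :=
            mul_le_mul_of_nonneg_left (h2.trans h1) (by positivity)
        _ = 1 / (4 * g) * sqNorm w := by field_simp) (fun j ↦ by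
      have h1 : ∀ k, sqNorm (v j k) ≤ τ := fun k ↦ by
        refine le_trans (le_of_eq ?_) (hW _ (idx (j, k)).2)
        rw [sqNorm, ← Finset.sum_coe_sort L]
        refine Finset.sum_congr rfl fun l _ ↦ ?_
        rw [← hA.isHermitian.apply]
        simp [hv]
      calc ∑ k, 1 / (g : ℝ) * sqNorm (v j k) ≤ ∑ k : Fin g, 1 / (g : ℝ) * τ :=
            Finset.sum_le_sum fun k _ ↦ mul_le_mul_of_nonneg_left (h1 k) (by positivity)
        _ = τ := by
          simp
          field_simp)
  have hinj' : Function.Injective fun j ↦ (idx (j, f j) : ι) := fun i j hij ↦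
    congrArg Prod.fst (hinj hij)
  refine ⟨Finset.univ.map ⟨_, hinj'⟩, fun i hi ↦ ?_, by simp, fun u hu ↦ ?_⟩
  · obtain ⟨j, -, rfl⟩ := Finset.mem_map.1 hi
    exact (idx (j, f j)).2
  · have h1 := hf fun l ↦ u l
    rw [hsq u hu] at h1
    rw [Finset.sum_map]
    simp only [hdot _ _ _ hu] at h1
    refine h1.trans_eq ?_
    congr 1
    field_simp
    ring

theorem card_large_column_le {A : Matrix ι ι ℂ} (hA : A.PosSemidef)
    (hAc : (1 - A).PosSemidef) {L W : Finset ι} (hLW : Disjoint L W) (τ : ℝ) :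
    τ * (W.filter fun i ↦ τ < ∑ l ∈ L, Complex.normSq (A i l)).card ≤ L.card / 4 := by
  have h1 : ∑ i ∈ W, ∑ l ∈ L, Complex.normSq (A i l) ≤ L.card / 4 := by
    rw [Finset.sum_comm]
    have : ∀ l ∈ L, ∑ i ∈ W, Complex.normSq (A i l) ≤ 1 / 4 := fun l hl ↦ by
      have := sum_normSq_mulVec_le hA hAc (W := W) (u := Pi.single l 1) fun i hi ↦ by
        rw [Pi.single_eq_of_ne]
        rintro rfl
        exact Finset.disjoint_left.1 hLW hl hi
      simpa [sqNorm, Pi.single_apply, apply_ite] using this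
    refine (Finset.sum_le_sum this).trans_eq ?_
    simp
    ring
  refine le_trans ?_ h1
  refine le_trans ?_ (Finset.sum_le_sum_of_subset_of_nonneg (Finset.filter_subset
    (fun i ↦ τ < ∑ l ∈ L, Complex.normSq (A i l)) W) fun i _ _ ↦
      Finset.sum_nonneg fun l _ ↦ Complex.normSq_nonneg _)
  rw [mul_comm, ← nsmul_eq_mul]
  exact Finset.card_nsmul_le_sum _ _ _ fun i hi ↦ (Finset.mem_filter.1 hi).2.le

theorem exists_extension {A : Matrix ι ι ℂ} (hA : A.PosSemidef) (hAc : (1 - A).PosSemidef)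
    {L W : Finset ι} {a E : ℝ} {n : ℕ} (hL : FormLE A L a) (hW : FormLE A W a)
    (hLW : Disjoint L W) (hLn : L.card < n) (hE : 0 < E) (hWn : n * (E + 1) ≤ W.card) :
    ∃ R ⊆ W, L.card + R.card = n ∧ FormLE A (L ∪ R) (a + √(1 / E)) := by
  have hn : (0 : ℝ) < n := Nat.cast_pos.2 (by omega)
  rcases L.eq_empty_or_nonempty with rfl | hLne
  · have : n ≤ W.card := by
      have : (n : ℝ) ≤ W.card := by nlinarith
      exact_mod_cast this
    obtain ⟨R, hR, hRn⟩ := Finset.exists_subset_card_eq this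
    refine ⟨R, hR, by simpa using hRn, ?_⟩
    rw [Finset.empty_union]
    exact hW.mono hR (by linarith [Real.sqrt_nonneg (1 / E)])
  have hl : (0 : ℝ) < L.card := Nat.cast_pos.2 hLne.card_pos
  obtain ⟨q, hq⟩ := Nat.exists_eq_add_of_lt hLn
  replace hq : L.card + (q + 1) = n := hq.symm
  set p := q + 1
  have hp : (0 : ℝ) < p := Nat.cast_pos.2 q.succ_pos
  have hqR : (L.card : ℝ) + p = n := by exact_mod_cast hq
  set τ : ℝ := L.card / (2 * n * E) with hτ
  have hτ0 : 0 < τ := by positivity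
  set W' := W.filter fun i ↦ ∑ l ∈ L, Complex.normSq (A i l) ≤ τ with hW'
  have hcard : (W'.card : ℝ) + (W.filter fun i ↦ τ < ∑ l ∈ L, Complex.normSq (A i l)).card =
      W.card := by
    have := Finset.card_filter_add_card_filter_not (s := W)
      fun i ↦ ∑ l ∈ L, Complex.normSq (A i l) ≤ τ
    simp only [not_le] at this
    exact_mod_cast this
  have hbad := card_large_column_le hA hAc hLW τ
  rw [← le_div_iff₀' hτ0] at hbad
  have e1 : (L.card : ℝ) / 4 / τ = n * E / 2 := by
    rw [hτ]
    field_simp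
    ring
  rw [e1] at hbad
  have hWc : n * (E + 2) / 2 ≤ (W'.card : ℝ) := by linarith
  set g := W'.card / p
  have hg : n * E / (2 * p) ≤ (g : ℝ) := by
    have h1 : W'.card < p * (g + 1) := Nat.lt_mul_div_succ _ q.succ_pos
    have h2 : (W'.card : ℝ) < p * (g + 1) := by exact_mod_cast h1
    rw [div_le_iff₀ (by positivity)]
    nlinarith
  have hg0 : (0 : ℝ) < g := lt_of_lt_of_le (by positivity) hg
  obtain ⟨R, hR, hRp, hRu⟩ := exists_subset_offDiagonal_le hA hAc (L := L) (W := W')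
    (hLW.mono_right (Finset.filter_subset _ _)) hτ0.le (fun i hi ↦ (Finset.mem_filter.1 hi).2)
    (q := p) (Nat.cast_pos.1 hg0) (Nat.mul_div_le _ _)
  have hRW := hR.trans (Finset.filter_subset _ _)
  refine ⟨R, hRW, by omega, hL.union hA.isHermitian (hW.mono hRW le_rfl)
    (hLW.mono_right hRW) (by positivity) fun u hu ↦ (hRu u hu).trans ?_⟩
  refine mul_le_mul_of_nonneg_right ?_ (sqNorm_nonneg u)
  have h3 : 1 / (2 * (g : ℝ)) ≤ p / (n * E) := by
    rw [div_le_iff₀ (by positivity)] at hg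
    rw [div_le_div_iff₀ (by positivity) (by positivity)]
    linarith
  have h4 : 2 * τ = L.card / (n * E) := by
    rw [hτ]
    field_simp
  have h5 : (p : ℝ) / (n * E) + L.card / (n * E) = 1 / E := by
    rw [← add_div, add_comm, hqR]
    field_simp
  linarith

end

section

variable {ι : Type*}

/-- `S` is a disjoint union of sets satisfying `p`. -/
def IsTiled (p : Finset ι → Prop) (S : Finset ι) : Prop :=
  ∃ l : List (Finset ι), l.Pairwise Disjoint ∧ (∀ T ∈ l, p T) ∧ ∀ i, i ∈ S ↔ ∃ T ∈ l, i ∈ T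

theorem isTiled_empty (p : Finset ι → Prop) : IsTiled p ∅ :=
  ⟨[], List.Pairwise.nil, by simp, by simp⟩

variable [DecidableEq ι]

theorem IsTiled.union {p : Finset ι → Prop} {S T : Finset ι} (hS : IsTiled p S) (hT : p T)
    (hTS : Disjoint T S) : IsTiled p (T ∪ S) := by
  obtain ⟨l, hl, hp, hu⟩ := hS
  refine ⟨T :: l, List.pairwise_cons.2 ⟨fun T' hT' ↦ ?_, hl⟩, ?_, fun i ↦ ?_⟩
  · refine Finset.disjoint_left.2 fun i hi hi' ↦ ?_
    exact Finset.disjoint_left.1 hTS hi ((hu i).2 ⟨T', hT', hi'⟩)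
  · simpa using ⟨hT, hp⟩
  · simp [hu]

variable [Fintype ι] {A : Matrix ι ι ℂ}

theorem FormLE.isTiled_union {n : ℕ} {b : ℝ} {M S : Finset ι} (hM : FormLE A M b)
    (hn : n ∣ M.card) (hMS : Disjoint M S)
    (hS : IsTiled (fun T ↦ T.card = n ∧ FormLE A T b) S) :
    IsTiled (fun T ↦ T.card = n ∧ FormLE A T b) (M ∪ S) := by
  obtain ⟨s, hs⟩ := hn
  induction s generalizing M with
  | zero =>
    rw [mul_zero, Finset.card_eq_zero] at hs
    rwa [hs, Finset.empty_union]
  | succ s ih =>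
    obtain ⟨T, hT, hTn⟩ := Finset.exists_subset_card_eq (s := M) (n := n) (by rw [hs]; lia)
    have h1 := ih (hM.mono Finset.sdiff_subset le_rfl)
      (hMS.mono_left (Finset.sdiff_subset (t := T)))
      (by rw [Finset.card_sdiff_of_subset hT, hs, hTn]; lia)
    have h2 := h1.union ⟨hTn, hM.mono hT le_rfl⟩
      (Finset.disjoint_union_right.2 ⟨Finset.disjoint_sdiff, hMS.mono_left hT⟩)
    rwa [← Finset.union_assoc, Finset.union_sdiff_of_subset hT] at h2

theorem isTiled_union_biUnion {κ : Type*} [DecidableEq κ] (hA : A.PosSemidef)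
    (hAc : (1 - A).PosSemidef) {n : ℕ} (hn : 0 < n) {a E : ℝ} (hE : 0 < E) {P : κ → Finset ι}
    (hP : ∀ t, FormLE A (P t) a) (hdisj : ∀ s t, s ≠ t → Disjoint (P s) (P t)) (T : Finset κ)
    {W : Finset ι} (hW : FormLE A W a) (hWP : ∀ t ∈ T, Disjoint W (P t))
    (hWn : n * (E + T.card) ≤ W.card) (hdvd : n ∣ W.card + ∑ t ∈ T, (P t).card) :
    IsTiled (fun S ↦ S.card = n ∧ FormLE A S (a + √(1 / E))) (W ∪ T.biUnion P) := by
  have ha : a ≤ a + √(1 / E) := by linarith [Real.sqrt_nonneg (1 / E)]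
  induction T using Finset.induction_on generalizing W with
  | empty =>
    exact (hW.mono subset_rfl ha).isTiled_union (by simpa using hdvd) (by simp)
      (isTiled_empty _)
  | insert t T ht ih =>
    rw [Finset.sum_insert ht] at hdvd
    rw [Finset.card_insert_of_notMem ht, Nat.cast_succ] at hWn
    obtain ⟨L, hL, hLn⟩ := Finset.exists_subset_card_eq (Nat.mod_le (P t).card n)
    have hWt := hWP t (Finset.mem_insert_self t T)
    obtain ⟨R, hR, hRn, hLR⟩ := exists_extension hA hAc ((hP t).mono hL le_rfl) hW
      (hWt.symm.mono_left hL) (hLn.trans_lt (Nat.mod_lt _ hn)) hE (hWn.trans' <| by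
        gcongr
        linarith [T.card.cast_nonneg (α := ℝ)])
    have hcW : (W \ R).card + R.card = W.card := Finset.card_sdiff_add_card_eq_card hR
    have hcP : (P t \ L).card + L.card = (P t).card := Finset.card_sdiff_add_card_eq_card hL
    have hmod := Nat.div_add_mod (P t).card n
    have h1 := ih (W := W \ R) (hW.mono Finset.sdiff_subset le_rfl)
      (fun s hs ↦ (hWP s (Finset.mem_insert_of_mem hs)).mono_left Finset.sdiff_subset)
      (by
        have : (R.card : ℝ) ≤ n := by exact_mod_cast (by lia : R.card ≤ n)
        have : ((W \ R).card : ℝ) + R.card = W.card := by exact_mod_cast hcW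
        linarith)
      (by
        have e : W.card + ((P t).card + ∑ s ∈ T, (P s).card) =
            ((W \ R).card + ∑ s ∈ T, (P s).card) + n * ((P t).card / n + 1) := by
          rw [mul_add]
          lia
        rw [e] at hdvd
        exact (Nat.dvd_add_left (dvd_mul_right n _)).1 hdvd)
    have hPT : Disjoint (P t) (T.biUnion P) := (Finset.disjoint_biUnion_right _ _ _).2
      fun s hs ↦ hdisj t s fun h ↦ ht (h ▸ hs)
    have hWT : Disjoint W (T.biUnion P) := (Finset.disjoint_biUnion_right _ _ _).2
      fun s hs ↦ hWP s (Finset.mem_insert_of_mem hs)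
    have h2 := h1.union ⟨(Finset.card_union_of_disjoint
      (hWt.symm.mono hL hR)).trans hRn, hLR⟩ (by
      rw [Finset.disjoint_union_left, Finset.disjoint_union_right, Finset.disjoint_union_right]
      exact ⟨⟨hWt.symm.mono hL Finset.sdiff_subset, hPT.mono_left hL⟩,
        Finset.disjoint_sdiff, hWT.mono_left hR⟩)
    have h3 := ((hP t).mono (Finset.sdiff_subset (t := L)) ha).isTiled_union
      (n := n) ⟨(P t).card / n, by lia⟩ (by
        simp only [Finset.disjoint_union_right]
        exact ⟨⟨Finset.sdiff_disjoint, hWt.symm.mono Finset.sdiff_subset hR⟩,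
          hWt.symm.mono Finset.sdiff_subset Finset.sdiff_subset,
          hPT.mono_left Finset.sdiff_subset⟩) h2
    convert h3 using 1
    ext i
    have hRi := @hR i
    have hLi := @hL i
    simp only [Finset.biUnion_insert, Finset.mem_union, Finset.mem_sdiff]
    tauto

omit [DecidableEq ι] in
theorem IsTiled.exists_fin {p : Finset ι → Prop} {r n : ℕ} (hn : 0 < n)
    (hι : Fintype.card ι = r * n) (hp : ∀ T, p T → T.card = n) (h : IsTiled p Finset.univ) :
    ∃ S : Fin r → Finset ι, (∀ k l, k ≠ l → Disjoint (S k) (S l)) ∧ (∀ i, ∃ k, i ∈ S k) ∧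
      ∀ k, p (S k) := by
  classical
  obtain ⟨l, hl, hpl, hu⟩ := h
  have hlen : l.length = r := by
    have hpair : ∀ i j : Fin l.length, i ≠ j → Disjoint (l.get i) (l.get j) := fun i j hij ↦ by
      rcases lt_or_gt_of_ne hij with h | h
      · exact List.pairwise_iff_get.1 hl i j h
      · exact (List.pairwise_iff_get.1 hl j i h).symm
    have h1 : (Finset.univ.biUnion l.get).card = ∑ i, (l.get i).card :=
      Finset.card_biUnion fun i _ j _ hij ↦ hpair i j hij
    have h2 : Finset.univ.biUnion l.get = Finset.univ := by
      ext i
      obtain ⟨T, hT, hi⟩ := (hu i).1 (Finset.mem_univ i)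
      obtain ⟨k, rfl⟩ := List.get_of_mem hT
      simpa using ⟨k, hi⟩
    rw [h2, Finset.card_univ, hι, Finset.sum_congr rfl fun i _ ↦ hp _ (hpl _ (l.get_mem i))] at h1
    simp only [Finset.sum_const, Finset.card_univ, Fintype.card_fin, smul_eq_mul] at h1
    exact (Nat.eq_of_mul_eq_mul_right hn h1).symm
  subst hlen
  refine ⟨l.get, fun i j hij ↦ ?_, fun i ↦ ?_, fun k ↦ hpl _ (l.get_mem k)⟩
  · rcases lt_or_gt_of_ne hij with h | h
    · exact List.pairwise_iff_get.1 hl i j h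
    · exact (List.pairwise_iff_get.1 hl j i h).symm
  · obtain ⟨T, hT, hi⟩ := (hu i).1 (Finset.mem_univ i)
    obtain ⟨k, rfl⟩ := List.get_of_mem hT
    exact ⟨k, hi⟩

theorem isTiled_univ (hA : A.PosSemidef) (hAc : (1 - A).PosSemidef) {r n : ℕ} (hn : 0 < n)
    (hι : Fintype.card ι = r * n) {α s : ℝ} (hα : 0 ≤ α) (hdiag : ∀ i, (A i i).re ≤ α)
    (hs : 0 < s) (hrs : r * s ^ 4 = 1) :
    IsTiled (fun T ↦ T.card = n ∧ FormLE A T (4 * s + α)) Finset.univ := by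
  rcases le_or_gt 1 (4 * s + α) with h | h
  · rw [← Finset.union_empty Finset.univ]
    exact ((formLE_of_one_sub hAc Finset.univ).mono subset_rfl h).isTiled_union
      ⟨r, by rw [Finset.card_univ, hι, mul_comm]⟩ (by simp) (isTiled_empty _)
  have hs4 : 4 * s < 1 := by linarith
  set E : ℝ := 1 / s ^ 2 with hE
  have hE0 : 0 < E := by positivity
  have hE16 : 16 ≤ E := by
    rw [hE, le_div_iff₀ (by positivity)]
    nlinarith
  have hr : (r : ℝ) = E ^ 2 := by
    rw [hE]
    field_simp
    linarith
  set k := ⌈E / 2⌉₊ with hk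
  have hk1 : E / 2 ≤ k := Nat.le_ceil _
  have hk2 : (k : ℝ) < E / 2 + 1 := Nat.ceil_lt_add_one (by positivity)
  have hk0 : 0 < (k : ℝ) := by linarith
  obtain ⟨c, hc⟩ := exists_paving hA hAc hα hdiag (Nat.cast_pos.1 hk0)
  set P : Fin k → Finset ι := fun t ↦ {i | c i = t} with hP
  have : Nonempty (Fin k) := ⟨⟨0, Nat.cast_pos.1 hk0⟩⟩
  have hPsum : ∑ t, (P t).card = r * n := by
    rw [← hι, ← Finset.card_univ]
    exact (Finset.card_eq_sum_card_fiberwise fun i _ ↦ Finset.mem_univ (c i)).symm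
  have hdisj : ∀ t t', t ≠ t' → Disjoint (P t) (P t') := fun t t' h ↦
    Finset.disjoint_left.2 fun i hi hi' ↦ h <| by
      simp only [hP, Finset.mem_filter_univ] at hi hi'
      rw [← hi, ← hi']
  obtain ⟨t, ht⟩ := Finite.exists_max fun t ↦ (P t).card
  have hPt : (r : ℝ) * n ≤ k * (P t).card := by
    have : r * n ≤ k * (P t).card := by
      rw [← hPsum]
      refine (Finset.sum_le_card_nsmul _ _ _ fun t' _ ↦ ht t').trans_eq (by simp)
    exact_mod_cast this
  have hT := isTiled_union_biUnion hA hAc hn hE0 hc hdisj (Finset.univ.erase t) (hc t)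
    (fun t' ht' ↦ hdisj t t' (Finset.ne_of_mem_erase ht').symm) (by
      have h1 : ((Finset.univ.erase t).card : ℝ) ≤ k := by
        exact_mod_cast (Finset.card_erase_le).trans_eq (by simp)
      have h2 : (k : ℝ) * (E + k) ≤ r := by
        rw [hr]
        nlinarith
      refine le_of_mul_le_mul_left ?_ hk0
      calc k * (n * (E + (Finset.univ.erase t).card)) ≤ k * (n * (E + k)) := by gcongr
        _ = k * (E + k) * n := by ring
        _ ≤ r * n := by gcongr
        _ ≤ _ := hPt)
    (by
      rw [Finset.add_sum_erase _ (fun t ↦ (P t).card) (Finset.mem_univ t), hPsum]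
      exact dvd_mul_left n r)
  have hroot : √(1 / E) = s := by
    rw [hE, one_div_one_div, Real.sqrt_sq hs.le]
  have hbound : α + 1 / k + (1 + α) / √k + √(1 / E) ≤ 4 * s + α := by
    have h1 : 1 / (k : ℝ) ≤ 2 * s ^ 2 := by
      rw [div_le_iff₀ hk0]
      have : s ^ 2 * E = 1 := by
        rw [hE]
        field_simp
      nlinarith
    have h2 : 1 / √k ≤ 3 / 2 * s := by
      rw [← Real.sqrt_one, ← Real.sqrt_div zero_le_one]
      refine Real.sqrt_le_iff.2 ⟨by positivity, ?_⟩
      nlinarith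
    have h3 : (1 + α) / √k ≤ (2 - 4 * s) * (3 / 2 * s) := by
      rw [div_eq_mul_one_div]
      exact mul_le_mul (by linarith) h2 (by positivity) (by linarith)
    rw [hroot]
    nlinarith
  have huniv : P t ∪ (Finset.univ.erase t).biUnion P = Finset.univ := by
    rw [← Finset.biUnion_insert, Finset.insert_erase (Finset.mem_univ t)]
    ext i
    simp [hP]
  rw [← huniv]
  obtain ⟨l, hl, hp, hu⟩ := hT
  exact ⟨l, hl, fun T hT ↦ ⟨(hp T hT).1, (hp T hT).2.mono subset_rfl hbound⟩, hu⟩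

end

theorem FormLE.re_le_of_isRoot {m : ℕ} {A : Matrix (Fin m) (Fin m) ℂ} {S : Finset (Fin m)}
    {b : ℝ} (h : FormLE A S b) {z : ℂ}
    (hz : (A.submatrix (Subtype.val : S → Fin m) Subtype.val).charpoly.IsRoot z) : z.re ≤ b := by
  rw [Polynomial.IsRoot, eval_charpoly] at hz
  obtain ⟨x, hx, hx0⟩ := exists_mulVec_eq_zero_iff.2 hz
  rw [sub_mulVec, sub_eq_zero, scalar_apply, ← smul_one_eq_diagonal, smul_mulVec, one_mulVec]
    at hx0
  set u : Fin m → ℂ := fun i ↦ if hi : i ∈ S then x ⟨i, hi⟩ else 0 with hu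
  have hu0 : ∀ i ∉ S, u i = 0 := fun i hi ↦ by simp [hu, hi]
  have hux : ∀ i : S, u i = x i := fun i ↦ by simp [hu]
  have hAu : ∀ i : S, (A *ᵥ u) i = z * x i := fun i ↦ by
    have h1 := congrFun hx0 i
    rw [Pi.smul_apply, smul_eq_mul] at h1
    rw [h1]
    refine (Finset.sum_subset S.subset_univ fun l _ hl ↦ by rw [hu0 l hl, mul_zero]).symm.trans ?_
    rw [← Finset.sum_coe_sort S]
    exact Finset.sum_congr rfl fun l _ ↦ by
      simp only [hux, submatrix_apply]
  have hn : sqNorm u = sqNorm x := by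
    refine (Finset.sum_subset S.subset_univ fun l _ hl ↦ by rw [hu0 l hl, map_zero]).symm.trans ?_
    rw [← Finset.sum_coe_sort S]
    exact Finset.sum_congr rfl fun l _ ↦ by rw [hux]
  have hQ : star u ⬝ᵥ (A *ᵥ u) = z * sqNorm x := by
    refine (Finset.sum_subset S.subset_univ fun l _ hl ↦ by
      rw [Pi.star_apply, hu0 l hl, star_zero, zero_mul]).symm.trans ?_
    rw [← Finset.sum_coe_sort S, ← star_dotProduct_self, dotProduct, Finset.mul_sum]
    exact Finset.sum_congr rfl fun l _ ↦ by
      rw [hAu, Pi.star_apply, hux, Pi.star_apply]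
      ring
  have h1 := h u hu0
  rw [hQ, hn, Complex.re_mul_ofReal] at h1
  exact le_of_mul_le_mul_right h1 (sqNorm_pos hx)

end

/-- **Equal-sized paving bound.** Every PSD contraction in `M_{rn}(ℂ)` with diagonal
entries at most `α` has an `r`-paving into blocks all of size exactly `n`, each with
largest eigenvalue at most `4·r^{-1/4} + α`. -/
theorem equal_sized_paving_bound {r n : ℕ} (hr : 1 ≤ r) (hn : 1 ≤ n)
    (A : Matrix (Fin (r * n)) (Fin (r * n)) ℂ)
    (hA : A.PosSemidef) (hAc : (1 - A).PosSemidef)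
    (α : ℝ) (hα : 0 ≤ α) (hdiag : ∀ i, (A i i).re ≤ α) :
    ∃ S : Fin r → Finset (Fin (r * n)),
      (∀ k l, k ≠ l → Disjoint (S k) (S l)) ∧
      (∀ i : Fin (r * n), ∃ k, i ∈ S k) ∧
      (∀ k, (S k).card = n) ∧
      ∀ k, ∀ z : ℂ, ((subMat A (S k)).charpoly).IsRoot z →
        z.re ≤ 4 * (r : ℝ) ^ (-(1 : ℝ) / 4) + α := by
  have hr0 : (0 : ℝ) < r := by exact_mod_cast hr
  obtain ⟨S, hdisj, hcover, hS⟩ := (isTiled_univ (n := n) (s := (r : ℝ) ^ (-(1 : ℝ) / 4)) hA hAc hn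
    (Fintype.card_fin _) hα hdiag (Real.rpow_pos_of_pos hr0 _) (by
      rw [← Real.rpow_natCast, ← Real.rpow_mul hr0.le, Nat.cast_ofNat,
        div_mul_cancel₀ _ four_ne_zero, Real.rpow_neg_one, mul_inv_cancel₀ hr0.ne'])).exists_fin
    hn (Fintype.card_fin _) fun T hT ↦ hT.1
  exact ⟨S, hdisj, hcover, fun k ↦ (hS k).1, fun k z hz ↦ (hS k).2.re_le_of_isRoot hz⟩
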